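/- Fix n ≥ 1 and a real δ with 0 < δ < 1/(2n-1). There is a constant c = c(n) > 0 and a constant C = C(n, δ) such that the following holds. Let D be a positive integer with prime factorization D = p_1^{k_1} ⋯ p_m^{k_m} where each exponent satisfies k_i ≥ 2, and suppose Cprod = p_1 ⋯ p_m < H^{1+δ} for a real H ≥ 2. Then the number of tuples (a_1,...,a_n) ∈ ℤ^n with |a_i| ≤ H for all i, such that for each i = 1, ..., m the reduction modulo p_i of x^n + a_1 x^{n-1} + ... + a_n has index at least k_i over 𝔽_{p_i}, is at most C · c^m · H^n / D. -/

import Mathlib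

open scoped Classical
open Polynomial

/-- The index of a polynomial `P` over a field `K`: writing `P = ∏ P_i^{e_i}` with the
`P_i` distinct irreducible of degree `f_i`, the index is `Σ (e_i - 1) f_i`; when the
irreducible factors of `P` are separable (e.g. in characteristic `0` or characteristic
greater than `deg P`) this equals `deg P` minus the number of distinct roots of `P` in
an algebraic closure of `K`. -/
noncomputable def polyIndexOver (K : Type*) [Field K] (P : Polynomial K) : ℕ :=
  P.natDegree - ((P.map (algebraMap K (AlgebraicClosure K))).roots.toFinset.card)

/-- The index over `𝔽_p` of the reduction modulo a prime `p` of the monic integer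
polynomial `x^n + a_1 x^{n-1} + ... + a_n`. -/
noncomputable def indexModP (p : ℕ) (hp : p.Prime) (n : ℕ) (a : Fin n → ℤ) : ℕ :=
  haveI : Fact p.Prime := ⟨hp⟩
  polyIndexOver (ZMod p)
    (X ^ n + ∑ i : Fin n, C ((a i : ZMod p)) * X ^ (n - 1 - (i : ℕ)))

section
namespace Stp
variable {K : Type*} [Field K]

noncomputable def Th (K : Type*) [Field K] (p n : ℕ) : K[X][X] →+* K[X][X][X] :=
  Polynomial.eval₂RingHom (R := K[X]) (S := K[X][X][X])
    (Polynomial.eval₂RingHom (R := K) (S := K[X][X][X])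
      ((C : K[X][X] →+* K[X][X][X]).comp ((C : K[X] →+* K[X][X]).comp (C : K →+* K[X])))
      (C (C X) * X ^ p)) (C X * X ^ n)

lemma Th_X (p n : ℕ) : Th K p n X = C X * X ^ n := by simp [Th]
lemma Th_CX (p n : ℕ) : Th K p n (C X) = C (C X) * X ^ p := by simp [Th]
lemma Th_CC (p n : ℕ) (a : K) : Th K p n (C (C a)) = C (C (C a)) := by simp [Th]

lemma Th_coeff (p n : ℕ) (P : K[X][X]) (w j i : ℕ) :
    (((Th K p n P).coeff w).coeff j).coeff i =
      if p * i + n * j = w then (P.coeff j).coeff i else 0 := by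
  induction P using Polynomial.induction_on' with
  | add P Q hP hQ => 
    simp only [map_add, coeff_add, hP, hQ]; split_ifs <;> simp
  | monomial j' g =>
    induction g using Polynomial.induction_on' with
    | add P Q hP hQ => 
      simp only [map_add, coeff_add, hP, hQ]; split_ifs <;> simp
    | monomial i' a =>
      have h1 : (monomial j' (monomial i' a) : K[X][X]) = C (C a) * (C X) ^ i' * X ^ j' := by
        rw [← C_mul_X_pow_eq_monomial, ← C_mul_X_pow_eq_monomial]; simp
      have h2 : Th K p n (monomial j' (monomial i' a)) =
          monomial (p * i' + n * j') (monomial j' (monomial i' a)) := by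
        rw [h1, map_mul, map_mul, map_pow, map_pow, Th_X, Th_CX, Th_CC]
        rw [← C_mul_X_pow_eq_monomial]
        simp only [map_mul, map_pow]
        ring
      rw [h2]
      clear h1 h2
      simp only [coeff_monomial]
      by_cases hj : j' = j <;> by_cases hi : i' = i <;> subst_vars <;> simp [coeff_monomial, *] <;> split_ifs <;> simp_all [coeff_monomial]

lemma Th_inj (p n : ℕ) : Function.Injective (Th K p n) := by
  rw [injective_iff_map_eq_zero]
  intro P h
  ext j i
  have := Th_coeff p n P (p * i + n * j) j i
  rw [h] at this
  simpa using this.symm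

lemma Th_natDegree_le (p n : ℕ) (P : K[X][X]) (d : ℕ)
    (h : ∀ i j, (P.coeff j).coeff i ≠ 0 → p * i + n * j ≤ d) : (Th K p n P).natDegree ≤ d := by
  rw [natDegree_le_iff_coeff_eq_zero]
  intro w hw
  ext j i
  rw [Th_coeff]
  split_ifs with h1
  · by_contra h2
    have := h i j (by simpa using h2)
    omega
  · simp

lemma Th_le_natDegree (p n : ℕ) (P : K[X][X]) (i j : ℕ) (h : (P.coeff j).coeff i ≠ 0) :
    p * i + n * j ≤ (Th K p n P).natDegree := by
  apply le_natDegree_of_ne_zero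
  intro h1
  have := Th_coeff p n P (p * i + n * j) j i
  rw [h1] at this
  simp at this
  exact h this.symm

/-- y-degree of leading part is at most the y-degree -/
lemma Th_lc_natDegree_le (p n : ℕ) (P : K[X][X]) (w : ℕ) :
    ((Th K p n P).coeff w).natDegree ≤ P.natDegree := by
  rw [natDegree_le_iff_coeff_eq_zero]
  intro j hj
  ext i
  rw [Th_coeff, coeff_eq_zero_of_natDegree_lt hj]
  simp

noncomputable def MM (p : ℕ) (f : K[X]) : K[X][X] := X ^ p - X - C f

lemma MM_monic (p : ℕ) (hp : 2 ≤ p) (f : K[X]) : (MM p f).Monic := by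
  rw [MM, sub_sub]
  apply monic_X_pow_sub
  refine lt_of_le_of_lt (b := (1 : WithBot ℕ)) ?_ (by exact_mod_cast (by omega : 1 < p))
  refine (degree_add_le _ _).trans ?_
  simp only [degree_X, sup_le_iff, le_refl, true_and]
  exact degree_C_le.trans (by norm_num)

lemma MM_natDegree (p : ℕ) (hp : 2 ≤ p) (f : K[X]) : (MM p f).natDegree = p := by
  rw [MM, sub_sub]
  apply natDegree_eq_of_degree_eq_some
  rw [degree_sub_eq_left_of_degree_lt] <;> rw [degree_X_pow]
  refine lt_of_le_of_lt (b := (1 : WithBot ℕ)) ?_ (by exact_mod_cast (by omega : 1 < p))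
  refine (degree_add_le _ _).trans ?_
  simp only [degree_X, sup_le_iff, le_refl, true_and]
  exact degree_C_le.trans (by norm_num)

lemma MM_coeff_p (p : ℕ) (hp : 2 ≤ p) (f : K[X]) : (MM p f).coeff p = 1 := by
  have := MM_monic p hp f
  rwa [Monic, leadingCoeff, MM_natDegree p hp] at this

lemma Th_MM_natDegree (p n : ℕ) (hp : 2 ≤ p) (f : K[X]) (hf : f.natDegree = n) :
    (Th K p n (MM p f)).natDegree = n * p := by
  apply le_antisymm
  · apply Th_natDegree_le
    intro i j h
    by_cases hj : j = 0
    · subst hj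
      have : (MM p f).coeff 0 = - f := by
        simp [MM, coeff_X_zero]
        intro h; omega
      rw [this] at h
      have : i ≤ n := hf ▸ le_natDegree_of_ne_zero (by simpa using h)
      nlinarith
    · have h2 : j ≤ p := by
        rw [← MM_natDegree p hp f]; apply le_natDegree_of_ne_zero
        intro h3; rw [h3] at h; simp at h
      have h3 : i = 0 := by
        by_contra hi
        apply h
        simp [MM, coeff_X_pow, coeff_X, coeff_C, hj]
        split_ifs <;> simp [coeff_one, hi]
      subst h3
      nlinarith
  · have := Th_le_natDegree p n (MM p f) 0 p (by rw [MM_coeff_p p hp]; simp)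
    simpa using this

lemma Th_MM_lc (p n : ℕ) (hp : 2 ≤ p) (f : K[X]) (hf : f.natDegree = n) :
    p ≤ (Th K p n (MM p f)).leadingCoeff.natDegree := by
  apply le_natDegree_of_ne_zero
  intro h
  have := Th_coeff p n (MM p f) (n*p) p 0
  rw [← Th_MM_natDegree p n hp f hf, ← leadingCoeff, h, MM_coeff_p p hp, Th_MM_natDegree p n hp f hf] at this
  simp at this

lemma lc_of_dvd (p n : ℕ) (hp : 2 ≤ p) (f : K[X]) (hf : f.natDegree = n) (S : K[X][X]) (hS : S ≠ 0) :
    p ≤ (Th K p n (MM p f * S)).leadingCoeff.natDegree := by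
  rw [map_mul, leadingCoeff_mul, natDegree_mul]
  · have := Th_MM_lc p n hp f hf
    omega
  · rw [leadingCoeff_ne_zero]
    intro h
    have := (Th_inj p n) (h.trans (map_zero _).symm)
    exact (MM_monic p hp f).ne_zero this
  · rw [leadingCoeff_ne_zero]
    intro h
    have := (Th_inj p n) (h.trans (map_zero _).symm)
    exact hS this

lemma Th_red (p n : ℕ) (hp : 2 ≤ p) (f : K[X]) (hf : f.natDegree = n) (P : K[X][X]) :
    (Th K p n (P %ₘ MM p f)).natDegree ≤ (Th K p n P).natDegree := by
  by_contra! hlt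
  have hM := MM_monic p hp f
  have e : P - P %ₘ MM p f = MM p f * (P /ₘ MM p f) := by
    rw [sub_eq_iff_eq_add, add_comm]; exact (modByMonic_add_div P (MM p f)).symm
  have hS : P /ₘ MM p f ≠ 0 := by
    intro h0
    rw [h0, mul_zero, sub_eq_zero] at e
    rw [← e] at hlt
    exact lt_irrefl _ hlt
  have h1 := lc_of_dvd p n hp f hf _ hS
  rw [← e, map_sub] at h1
  have h2 : (Th K p n P - Th K p n (P %ₘ MM p f)).leadingCoeff
      = - (Th K p n (P %ₘ MM p f)).leadingCoeff := by
    exact leadingCoeff_sub_of_degree_lt' (degree_lt_degree hlt)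
  rw [h2, natDegree_neg] at h1
  have h3 := Th_lc_natDegree_le p n (P %ₘ MM p f) (Th K p n (P %ₘ MM p f)).natDegree
  have h4 := natDegree_modByMonic_lt P hM (by intro h; have := MM_natDegree p hp f; rw [h] at this; simp at this; omega)
  rw [MM_natDegree p hp] at h4
  rw [leadingCoeff] at h1
  omega
end Stp

end

section
namespace Stp
variable {K : Type*} [Field K]

lemma Th_yA (p n Q' : ℕ) (hp : 2 ≤ p) (hn : 1 ≤ n) (hQ : 1 ≤ Q') (A : K[X]) (hA : A.natDegree = n * Q') :
    (Th K p n (X + C A)).natDegree = n * (p * Q') ∧ (Th K p n (X + C A)).leadingCoeff.natDegree = 0 := by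
  have hA0 : A ≠ 0 := by
    rintro rfl
    simp at hA; omega
  have hpQ : 2 ≤ p * Q' := by nlinarith
  have hlt : n < n * (p * Q') := by nlinarith
  have hc : ∀ i j, ((X + C A : K[X][X]).coeff j).coeff i ≠ 0 → (j = 0 ∧ i ≤ n * Q') ∨ (j = 1 ∧ i = 0) := by
    intro i j h
    rcases j with _ | _ | j
    · left
      refine ⟨rfl, ?_⟩
      rw [← hA]; apply le_natDegree_of_ne_zero; simpa using h
    · right
      refine ⟨rfl, ?_⟩
      by_contra hi
      simp [coeff_one, hi] at h
    · simp [coeff_X] at h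
  have h1 : (Th K p n (X + C A)).natDegree = n * (p * Q') := by
    apply le_antisymm
    · apply Th_natDegree_le
      intro i j h
      rcases hc i j h with ⟨rfl, h⟩ | ⟨rfl, rfl⟩
      · nlinarith
      · omega
    · have := Th_le_natDegree p n (X + C A) (n * Q') 0 (by
        simp only [coeff_add, coeff_X_zero, coeff_C_zero, zero_add]
        rw [← hA]; simpa using hA0)
      nlinarith
  refine ⟨h1, ?_⟩
  rw [← Nat.le_zero, natDegree_le_iff_coeff_eq_zero]
  intro j hj
  ext i
  rw [leadingCoeff, h1, Th_coeff]
  split_ifs with h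
  · by_contra h2
    rcases hc i j (by simpa using h2) with ⟨rfl, h⟩ | ⟨rfl, rfl⟩
    · omega
    · omega
  · simp

noncomputable def EE (A : K[X]) (Q u' v' u v : ℕ) : K[X][X] :=
  (C X) ^ (u' + u * Q) * X ^ v' * (X + C A) ^ v

lemma Th_mon (p n a b : ℕ) : Th K p n ((C X) ^ a * X ^ b) =
    C (C X ^ a * X ^ b) * X ^ (p * a + n * b) := by
  simp only [map_mul, map_pow, Th_X, Th_CX]; ring

lemma Th_EE (p n Q' : ℕ) (hp : 2 ≤ p) (hn : 1 ≤ n) (hQ : 1 ≤ Q') (A : K[X]) (hA : A.natDegree = n * Q')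
    (u' v' u v : ℕ) :
    (Th K p n (EE A (p * Q') u' v' u v)).natDegree = p * u' + n * v' + (p * Q') * (p * u + n * v) ∧
    (Th K p n (EE A (p * Q') u' v' u v)).leadingCoeff.natDegree = v' ∧
    (Th K p n (EE A (p * Q') u' v' u v)).leadingCoeff ≠ 0 := by
  obtain ⟨h1, h2⟩ := Th_yA p n Q' hp hn hQ A hA
  have h0 : Th K p n (X + C A) ≠ 0 := by
    intro h; rw [h] at h1; simp at h1; omega
  have hm : (C X ^ (u' + u * (p * Q')) * X ^ v' : K[X][X]) ≠ 0 := by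
    apply mul_ne_zero <;> apply pow_ne_zero <;> simp
  have hm' : (C (C X ^ (u' + u * (p * Q')) * X ^ v' : K[X][X]) : K[X][X][X]) ≠ 0 := by
    rwa [Ne, C_eq_zero]
  rw [EE, map_mul, Th_mon, map_pow]
  refine ⟨?_, ?_, ?_⟩
  · rw [natDegree_mul (mul_ne_zero hm' (pow_ne_zero _ X_ne_zero)) (pow_ne_zero _ h0),
      natDegree_mul hm' (pow_ne_zero _ X_ne_zero), natDegree_pow, natDegree_pow, natDegree_C, natDegree_X, h1]
    ring
  · rw [leadingCoeff_mul, leadingCoeff_mul, leadingCoeff_C, leadingCoeff_pow, leadingCoeff_X, one_pow, mul_one,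
      leadingCoeff_pow, natDegree_mul hm (pow_ne_zero _ (by simpa using h0)), natDegree_pow, h2]
    rw [natDegree_mul (pow_ne_zero _ (by simp)) (pow_ne_zero _ X_ne_zero), natDegree_pow, natDegree_pow]
    simp
  · rw [leadingCoeff_ne_zero]
    exact mul_ne_zero (mul_ne_zero hm' (pow_ne_zero _ X_ne_zero)) (pow_ne_zero _ h0)

lemma weight_inj (p n Q : ℕ) (hpn : Nat.Coprime p n) (u₁ v₁ w₁ z₁ u₂ v₂ w₂ z₂ : ℕ)
    (hv₁ : v₁ < p) (hv₂ : v₂ < p) (hz₁ : z₁ < p) (hz₂ : z₂ < p)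
    (h1 : p * u₁ + n * v₁ < Q) (h2 : p * u₂ + n * v₂ < Q)
    (h : p * u₁ + n * v₁ + Q * (p * w₁ + n * z₁) = p * u₂ + n * v₂ + Q * (p * w₂ + n * z₂)) :
    u₁ = u₂ ∧ v₁ = v₂ ∧ w₁ = w₂ ∧ z₁ = z₂ := by
  have key : ∀ a b c d : ℕ, b < p → d < p → p * a + n * b = p * c + n * d → a = c ∧ b = d := by
    intro a b c d hb hd h
    have hbd : b = d := by
      have : n * b ≡ n * d [MOD p] := by
        have : (p * a + n * b) % p = (p * c + n * d) % p := by rw [h]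
        simpa [Nat.ModEq, Nat.mul_add_mod] using this
      have := Nat.ModEq.cancel_left_of_coprime hpn this
      rwa [Nat.ModEq, Nat.mod_eq_of_lt hb, Nat.mod_eq_of_lt hd] at this
    subst hbd
    refine ⟨?_, rfl⟩
    have : p * a = p * c := by omega
    exact Nat.eq_of_mul_eq_mul_left (by omega) this
  have e1 : p * u₁ + n * v₁ = p * u₂ + n * v₂ := by
    have : (p * u₁ + n * v₁ + Q * (p * w₁ + n * z₁)) % Q = (p * u₂ + n * v₂ + Q * (p * w₂ + n * z₂)) % Q := by rw [h]
    rwa [Nat.add_mul_mod_self_left, Nat.add_mul_mod_self_left, Nat.mod_eq_of_lt h1, Nat.mod_eq_of_lt h2] at this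
  have e2 : p * w₁ + n * z₁ = p * w₂ + n * z₂ := by
    rw [e1] at h
    exact Nat.eq_of_mul_eq_mul_left (by omega) (Nat.add_left_cancel h)
  obtain ⟨a, b⟩ := key _ _ _ _ hv₁ hv₂ e1
  obtain ⟨c, d⟩ := key _ _ _ _ hz₁ hz₂ e2
  exact ⟨a, b, c, d⟩

abbrev Idx (p U' U : ℕ) := (Fin U' × Fin p) × (Fin U × Fin p)

noncomputable def PP {p U' U : ℕ} (A : K[X]) (Q : ℕ) (c : Idx p U' U → K) : K[X][X] :=
  ∑ k, C (C (c k)) * EE A Q k.1.1 k.1.2 k.2.1 k.2.2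

lemma not_dvd {p n Q' U' U : ℕ} (hp : 2 ≤ p) (hn : 1 ≤ n) (hpn : Nat.Coprime p n) (hQ : 1 ≤ Q')
    (hU' : U' + n ≤ Q') (f A : K[X]) (hf : f.natDegree = n) (hA : A.natDegree = n * Q')
    (c : Idx p U' U → K) (hc : c ≠ 0) : ¬ MM p f ∣ PP A (p * Q') c := by
  set W : Idx p U' U → ℕ := fun k => p * k.1.1 + n * k.1.2 + (p * Q') * (p * k.2.1 + n * k.2.2) with hW
  have hsmall : ∀ k : Idx p U' U, p * k.1.1 + n * k.1.2 < p * Q' := by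
    rintro ⟨⟨u', v'⟩, u, v⟩
    have h1 : (u' : ℕ) + 1 ≤ U' := u'.2
    have h2 : (v' : ℕ) + 1 ≤ p := v'.2
    simp only
    nlinarith
  have hinj : Function.Injective W := by
    rintro ⟨⟨u', v'⟩, u, v⟩ ⟨⟨u₂', v₂'⟩, u₂, v₂⟩ h
    have := weight_inj p n (p * Q') hpn _ _ _ _ _ _ _ _ v'.2 v₂'.2 v.2 v₂.2 (hsmall ⟨⟨u', v'⟩, u, v⟩) (hsmall ⟨⟨u₂', v₂'⟩, u₂, v₂⟩) h
    simp only [Prod.mk.injEq, Fin.ext_iff]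
    tauto
  obtain ⟨k₀, hk₀⟩ : ∃ k, c k ≠ 0 := by
    by_contra! h; exact hc (funext h)
  obtain ⟨k, hk, hmax⟩ := Finset.exists_max_image (Finset.univ.filter (fun k => c k ≠ 0)) W ⟨k₀, by simp [hk₀]⟩
  simp only [Finset.mem_filter, Finset.mem_univ, true_and] at hk hmax
  have hE := fun k : Idx p U' U => Th_EE p n Q' hp hn hQ A hA k.1.1 k.1.2 k.2.1 k.2.2
  have hT : Th K p n (PP A (p * Q') c) = ∑ k, C (C (C (c k))) * Th K p n (EE A (p * Q') k.1.1 k.1.2 k.2.1 k.2.2) := by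
    simp only [PP, map_sum, map_mul, Th_CC]
  have hdeg : (Th K p n (PP A (p * Q') c)).natDegree ≤ W k := by
    rw [hT]
    apply natDegree_sum_le_of_forall_le
    intro i _
    by_cases hi : c i = 0
    · simp [hi]
    · refine (natDegree_C_mul_le _ _).trans ?_
      rw [(hE i).1]
      exact hmax i hi
  have hco : (Th K p n (PP A (p * Q') c)).coeff (W k) =
      C (C (c k)) * (Th K p n (EE A (p * Q') k.1.1 k.1.2 k.2.1 k.2.2)).leadingCoeff := by
    rw [hT, finsetSum_coeff, Finset.sum_eq_single k]
    · rw [coeff_C_mul, leadingCoeff, (hE k).1]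
    · intro i _ hik
      by_cases hi : c i = 0
      · simp [hi]
      · rw [coeff_C_mul, coeff_eq_zero_of_natDegree_lt, mul_zero]
        rw [(hE i).1]
        exact lt_of_le_of_ne (hmax i hi) (fun h => hik (hinj h))
    · simp
  have hne : (Th K p n (PP A (p * Q') c)).coeff (W k) ≠ 0 := by
    rw [hco]
    exact mul_ne_zero (by simpa using hk) (hE k).2.2
  have hnd : (Th K p n (PP A (p * Q') c)).natDegree = W k :=
    le_antisymm hdeg (le_natDegree_of_ne_zero hne)
  rintro ⟨S, hS⟩
  have hS0 : S ≠ 0 := by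
    rintro rfl
    rw [hS] at hne
    simp at hne
  have := lc_of_dvd p n hp f hf S hS0
  rw [← hS, leadingCoeff, hnd, hco, natDegree_C_mul (by simpa using hk), (hE k).2.1] at this
  have := k.1.2.2
  omega
end Stp

end

section
namespace Stp
variable {K : Type*} [Field K]

lemma wt_card (p n d : ℕ) (hpn : Nat.Coprime p n) (hp : 0 < p) :
    (((Finset.range (d+1)) ×ˢ (Finset.range p)).filter (fun x => p * x.1 + n * x.2 ≤ d)).card ≤ d + 1 := by
  have := Finset.card_le_card_of_injOn (s := ((Finset.range (d+1)) ×ˢ (Finset.range p)).filter (fun x => p * x.1 + n * x.2 ≤ d)) (t := Finset.range (d+1)) (fun x => p * x.1 + n * x.2) ?_ ?_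
  · simpa using this
  · rintro ⟨a, b⟩ h
    simp at h ⊢
    omega
  · rintro ⟨a, b⟩ h ⟨a', b'⟩ h' e
    simp at h h' e
    have := weight_inj p n (d+1) hpn a b 0 0 a' b' 0 0 h.1.2 h'.1.2 (by omega) (by omega) (by omega) (by omega) (by simpa using e)
    simp [this.1, this.2.1]

noncomputable def TT {p U' U : ℕ} (A : K[X]) (Q : ℕ) (c : Idx p U' U → K) : K[X][X] :=
  ∑ k, C (C (c k ^ Q)) * EE A Q k.2.1 k.2.2 k.1.1 k.1.2

lemma exists_ker {p s n Q' U' U : ℕ} [Fact p.Prime] [CharP K p] [Fintype K] (hn : 1 ≤ n) (hpn : Nat.Coprime p n)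
    (hQ : 1 ≤ Q') (hs : p * Q' = p ^ s)
    (f A : K[X]) (hf : f.natDegree = n) (hA : A.natDegree = n * Q') (d : ℕ)
    (hd : ∀ k : Idx p U' U, p * k.2.1 + n * k.2.2 + (p * Q') * (p * k.1.1 + n * k.1.2) ≤ d)
    (hcard : d + 1 < (U' * p) * (U * p)) :
    ∃ c : Idx p U' U → K, c ≠ 0 ∧ MM p f ∣ TT A (p * Q') c := by
  have hp : 2 ≤ p := (Fact.out : p.Prime).two_le
  set Z := ((Finset.range (d+1)) ×ˢ (Finset.range p)).filter (fun x => p * x.1 + n * x.2 ≤ d) with hZ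
  let Φ : (Idx p U' U → K) → (Z → K) := fun c z => (((TT A (p * Q') c) %ₘ MM p f).coeff z.1.2).coeff z.1.1
  have hlt : Fintype.card (Z → K) < Fintype.card (Idx p U' U → K) := by
    rw [Fintype.card_fun, Fintype.card_fun]
    apply Nat.pow_lt_pow_right Fintype.one_lt_card
    simp only [Fintype.card_coe, Fintype.card_prod, Fintype.card_fin]
    exact lt_of_le_of_lt (wt_card p n d hpn (by omega)) hcard
  obtain ⟨c₁, c₂, hne, heq⟩ := Fintype.exists_ne_map_eq_of_card_lt Φ hlt
  refine ⟨c₁ - c₂, sub_ne_zero.2 hne, ?_⟩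
  have hsub : TT A (p * Q') (c₁ - c₂) = TT A (p * Q') c₁ - TT A (p * Q') c₂ := by
    rw [TT, TT, TT, ← Finset.sum_sub_distrib]
    apply Finset.sum_congr rfl
    intro k _
    rw [hs, Pi.sub_apply, sub_pow_char_pow]
    simp only [map_sub, sub_mul]
  have hM := MM_monic p hp f
  rw [← modByMonic_eq_zero_iff_dvd hM]
  have hred : TT A (p * Q') (c₁ - c₂) %ₘ MM p f = TT A (p * Q') c₁ %ₘ MM p f - TT A (p * Q') c₂ %ₘ MM p f := by
    rw [hsub, sub_modByMonic]
  have hdeg : (Th K p n (TT A (p * Q') (c₁ - c₂) %ₘ MM p f)).natDegree ≤ d := by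
    refine (Th_red p n hp f hf _).trans ?_
    simp only [TT, map_sum, map_mul, Th_CC]
    apply natDegree_sum_le_of_forall_le
    intro k _
    refine (natDegree_C_mul_le _ _).trans ?_
    rw [(Th_EE p n Q' hp hn hQ A hA _ _ _ _).1]
    exact hd k
  ext j i
  by_contra hne0
  have h1 := (Th_le_natDegree p n _ i j (by simpa using hne0)).trans hdeg
  have h2 : j < p := by
    by_contra hj
    apply hne0
    have : (TT A (p * Q') (c₁ - c₂) %ₘ MM p f).coeff j = 0 := by
      apply coeff_eq_zero_of_natDegree_lt
      have h4 := natDegree_modByMonic_lt (TT A (p * Q') (c₁ - c₂)) hM (by intro h; have := MM_natDegree p hp f; rw [h] at this; simp at this; omega)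
      rw [MM_natDegree p hp] at h4
      omega
    rw [this]; simp
  have hz : (i, j) ∈ Z := by
    simp only [hZ, Finset.mem_filter, Finset.mem_product, Finset.mem_range]
    refine ⟨⟨?_, h2⟩, h1⟩
    nlinarith
  have := congrFun heq ⟨(i, j), hz⟩
  apply hne0
  rw [hred]
  simp only [Φ] at this
  simp [this]

lemma ar1 {p n u v a b : ℕ} (h1 : u + 1 ≤ a) (h2 : v + 1 ≤ p) (hb : a + n ≤ b) :
    p * u + n * v + p ≤ p * b := by
  have e1 := Nat.mul_le_mul_left p h1
  have e2 := Nat.mul_le_mul_left n h2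
  have e3 := Nat.mul_le_mul_left p hb
  nlinarith

set_option maxHeartbeats 1000000 in
theorem stepanov {p s n Q' : ℕ} [Fact p.Prime] [CharP K p] [Fintype K] (hn : 1 ≤ n) (hpn : Nat.Coprime p n)
    (hs : p * Q' = p ^ s) (hq : Fintype.card K = (p * Q') ^ 2) (hbig : 4 * (n + 1) ^ 2 * p ≤ Q')
    (f A : K[X]) (hf : f.natDegree = n) (hA : A.natDegree = n * Q')
    (hyA : ∀ x y : K, y ^ p - y = f.eval x → y ^ (p * Q') = y + A.eval x) :
    p * (Finset.univ.filter (fun x : K => ∃ y, y ^ p - y = f.eval x)).card ≤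
      (p * Q') ^ 2 + (2 * p * n + 1) * (p * Q') := by
  have hp : 2 ≤ p := (Fact.out : p.Prime).two_le
  have hQ : 1 ≤ Q' := by nlinarith
  have hnQ : n + 1 ≤ Q' := by nlinarith
  obtain ⟨U', hU'⟩ : ∃ U', Q' = U' + n := ⟨Q' - n, by omega⟩
  set U := Q' + n + 1 with hU
  obtain ⟨c, hc0, hc⟩ := exists_ker (U' := U') (U := U) hn hpn hQ hs f A hf hA ((p * Q') * (p * Q' - p) + p * Q' + 2 * p * n) (by
    rintro ⟨⟨u', v'⟩, u, v⟩
    have h1 : (u' : ℕ) + 1 ≤ U' := u'.2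
    have h2 : (v' : ℕ) + 1 ≤ p := v'.2
    have h3 : (u : ℕ) + 1 ≤ U := u.2
    have h4 : (v : ℕ) + 1 ≤ p := v.2
    simp only
    have e1 : p * u + n * v ≤ p * Q' + 2 * p * n := by
      have := ar1 (n := n) (b := Q' + 2 * n + 1) h3 h4 (by omega)
      linarith
    have e2 : p * u' + n * v' ≤ p * Q' - p := by
      apply Nat.le_sub_of_add_le; exact ar1 h1 h2 (by omega)
    have := Nat.mul_le_mul_left (p * Q') e2
    omega) (by
    obtain ⟨Q'', hQ''⟩ : ∃ Q'', Q' = Q'' + 1 := ⟨Q' - 1, by omega⟩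
    have : p * Q' - p = p * Q'' := by rw [hQ'', mul_add]; omega
    rw [this, hU]
    have e3 : p * (U' + n) = p * Q' := by rw [hU']
    have e4 : U' * p * ((Q' + n + 1) * p) = p * Q' * (p * Q'') + p * p * (2 * Q') - p * p * (n * (n + 1)) := by
      apply Nat.eq_sub_of_add_eq
      zify at hU' hQ'' ⊢
      have : (U' : ℤ) = Q' - n := by linarith
      have h2 : (Q'' : ℤ) = Q' - 1 := by linarith
      rw [this, h2]; ring
    rw [e4]
    apply Nat.lt_sub_of_add_lt
    have e5 : p * (n * (n+1)) + 2 * n + 1 ≤ Q' := by nlinarith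
    nlinarith)
  have hM := MM_monic p hp f
  set P := PP A (p * Q') c with hP
  set R := P %ₘ MM p f with hR
  have hR0 : R ≠ 0 := by
    rw [Ne, modByMonic_eq_zero_iff_dvd hM]
    exact not_dvd hp hn hpn hQ (by omega) f A hf hA c hc0
  have hRd : R.natDegree < p := by
    have h4 := natDegree_modByMonic_lt P hM (by intro h; have := MM_natDegree p hp f; rw [h] at this; simp at this; omega)
    rwa [MM_natDegree p hp] at h4
  obtain ⟨j, hj⟩ : ∃ j, R.coeff j ≠ 0 := by
    by_contra! h; exact hR0 (by ext1 j; simp [h j])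
  have hwR : (Th K p n R).natDegree ≤ (p * Q') ^ 2 + (2 * p * n + 1) * (p * Q') := by
    refine (Th_red p n hp f hf _).trans ?_
    simp only [hP, PP, map_sum, map_mul, Th_CC]
    apply natDegree_sum_le_of_forall_le
    rintro ⟨⟨u', v'⟩, u, v⟩ _
    refine (natDegree_C_mul_le _ _).trans ?_
    rw [(Th_EE p n Q' hp hn hQ A hA _ _ _ _).1]
    have h1 : (u' : ℕ) + 1 ≤ U' := u'.2
    have h2 : (v' : ℕ) + 1 ≤ p := v'.2
    have h3 : (u : ℕ) + 1 ≤ U := u.2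
    have h4 : (v : ℕ) + 1 ≤ p := v.2
    simp only
    have e1 : p * u + n * v ≤ p * Q' + 2 * p * n := by
      have := ar1 (n := n) (b := Q' + 2 * n + 1) h3 h4 (by omega)
      linarith
    have e2 : p * u' + n * v' ≤ p * Q' := by
      have := ar1 (n := n) (b := Q') h1 h2 (by omega)
      omega
    have := Nat.mul_le_mul_left (p * Q') e1
    nlinarith
  have hjd : p * (R.coeff j).natDegree ≤ (p * Q') ^ 2 + (2 * p * n + 1) * (p * Q') := by
    have := Th_le_natDegree p n R (R.coeff j).natDegree j (by simpa using hj)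
    omega
  refine le_trans (Nat.mul_le_mul_left p ?_) hjd
  -- points
  have hpt : ∀ x y : K, y ^ p - y = f.eval x → (P.eval (C y)).eval x = 0 := by
    intro x y hxy
    have hQy := hyA x y hxy
    have hfx : x ^ (p * Q') ^ 2 = x := by rw [← hq]; exact FiniteField.pow_card x
    have hfy : y ^ (p * Q') ^ 2 = y := by rw [← hq]; exact FiniteField.pow_card y
    have hT : ((TT A (p * Q') c).eval (C y)).eval x = 0 := by
      obtain ⟨S, hS⟩ := hc
      rw [hS]
      simp [MM, hxy]
    have : ((P.eval (C y)).eval x) ^ (p * Q') = ((TT A (p * Q') c).eval (C y)).eval x := by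
      simp only [hP, PP, TT, eval_finsetSum]
      rw [hs, sum_pow_char_pow, ← hs]
      apply Finset.sum_congr rfl
      intro k _
      simp only [EE, eval_mul, eval_C, eval_pow, eval_add, eval_X]
      rw [← hQy]
      simp only [mul_pow, ← pow_mul]
      have a1 : x ^ (((k.1.1 : ℕ) + k.2.1 * (p * Q')) * (p * Q')) = x ^ ((k.2.1 : ℕ) + k.1.1 * (p * Q')) := by
        rw [add_mul, pow_add, mul_assoc, ← sq, mul_comm (k.2.1 : ℕ), pow_mul x (_ ^ 2), hfx, pow_add]
        ring
      have a2 : y ^ (p * Q' * k.2.2 * (p * Q')) = y ^ (k.2.2 : ℕ) := by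
        rw [show p * Q' * k.2.2 * (p * Q') = (p * Q') ^ 2 * k.2.2 by ring, pow_mul, hfy]
      rw [a1, a2]
      ring
    rw [hT] at this
    exact pow_eq_zero_iff (by positivity) |>.1 this
  have hroot : ∀ x ∈ Finset.univ.filter (fun x : K => ∃ y, y ^ p - y = f.eval x), (R.coeff j).eval x = 0 := by
    intro x hx
    simp only [Finset.mem_filter, Finset.mem_univ, true_and] at hx
    obtain ⟨y, hy⟩ := hx
    have hz : R.map (evalRingHom x) = 0 := by
      apply eq_zero_of_natDegree_lt_card_of_eval_eq_zero (f := fun a : ZMod p => y + ZMod.castHom dvd_rfl K a)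
      · intro a b hab
        exact (ZMod.castHom dvd_rfl K).injective (add_left_cancel hab)
      · intro a
        set y' := y + ZMod.castHom dvd_rfl K a with hy'
        have hyy : y' ^ p - y' = f.eval x := by
          rw [hy', add_pow_char, ← map_pow, ZMod.pow_card, ← hy]; ring
        have h1 := hpt x y' hyy
        rw [← modByMonic_add_div P (MM p f)] at h1
        have h2 : (eval x (eval (C y') (MM p f))) = 0 := by simp [MM, hyy]
        rw [eval_add, eval_mul, eval_add, eval_mul, h2, zero_mul, add_zero] at h1
        rw [eval_map, ← h1, hR]
        have := eval₂_at_apply (p := P %ₘ MM p f) (evalRingHom x) (C y')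
        simpa using this
      · rw [ZMod.card]
        exact lt_of_le_of_lt natDegree_map_le hRd
    have := congrArg (fun g => g.coeff j) hz
    simpa using this
  exact card_le_degree_of_subset_roots (by
    intro x hx
    rw [mem_roots hj]
    exact hroot x (by simpa using hx))
end Stp

end

section
namespace Stp
variable {K : Type*} [Field K]

noncomputable def AA (p : ℕ) (f : K[X]) (s : ℕ) : K[X] := ∑ j ∈ Finset.range s, f ^ p ^ j

lemma AA_natDegree (p n : ℕ) (hp : 2 ≤ p) (hn : 1 ≤ n) (f : K[X]) (hf : f.natDegree = n) (s : ℕ) :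
    (AA p f (s+1)).natDegree = n * p ^ s := by
  induction s with
  | zero => simp [AA, hf]
  | succ s ih =>
    rw [AA, Finset.sum_range_succ, ← AA, natDegree_add_eq_right_of_natDegree_lt]
    · rw [natDegree_pow, hf, mul_comm]
    · rw [ih, natDegree_pow, hf, pow_succ]
      have : 0 < p ^ s := by positivity
      nlinarith

lemma AA_eval (p : ℕ) [Fact p.Prime] [CharP K p] (f : K[X]) (s : ℕ) (x y : K) (h : y ^ p - y = f.eval x) :
    y ^ p ^ s = y + (AA p f s).eval x := by
  induction s with
  | zero => simp [AA]
  | succ s ih =>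
    have h' : y ^ p = y + f.eval x := by rw [← h]; ring
    rw [AA, Finset.sum_range_succ, ← AA, eval_add, eval_pow, ← add_assoc, ← ih, pow_succ', pow_mul, h',
      add_pow_char_pow]

theorem charsum_K {p s n : ℕ} [Fact p.Prime] [CharP K p] [Fintype K] (hn : 1 ≤ n) (hpn : Nat.Coprime p n)
    (hq : Fintype.card K = p ^ (2 * (s + 1))) (hbig : 4 * (n + 1) ^ 2 * p ≤ p ^ s)
    (f : K[X]) (hf : f.natDegree = n) (Ψ : AddChar K ℂ) (hΨ : Ψ ≠ 1) (hΨp : ∀ y, Ψ (y ^ p) = Ψ y) :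
    ‖∑ x, Ψ (f.eval x)‖ ≤ (2 * p * n + 1) * p ^ (s + 1) := by
  have hp : 2 ≤ p := (Fact.out : p.Prime).two_le
  set Q := p ^ (s + 1) with hQ
  have hq2 : Fintype.card K = Q ^ 2 := by rw [hq, hQ]; ring
  set B := Q ^ 2 + (2 * p * n + 1) * Q with hB
  set N : K → ℕ := fun c => (Finset.univ.filter (fun z : K × K => f.eval z.1 - z.2 ^ p + z.2 = c)).card with hN
  have hNB : ∀ c, N c ≤ B := by
    intro c
    have hfc : (f - C c).natDegree = n := by rw [natDegree_sub_C, hf]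
    have h1 := stepanov (s := s + 1) (Q' := p ^ s) hn hpn (by ring) (by rw [hq]; ring) hbig (f - C c) (AA p (f - C c) (s+1)) hfc
      (AA_natDegree p n hp hn _ hfc s) (by
        intro x y h
        rw [← pow_succ']
        exact AA_eval p _ _ x y h)
    rw [← pow_succ', ← hQ, ← hB] at h1
    refine le_trans ?_ h1
    refine Finset.card_le_mul_card_image_of_maps_to (f := Prod.fst) ?_ p ?_
    · intro z hz
      simp only [Finset.mem_filter, Finset.mem_univ, true_and] at hz ⊢
      refine ⟨z.2, ?_⟩
      rw [eval_sub, eval_C, ← hz]; ring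
    · intro x _
      have hne : (X ^ p - X - C (f.eval x - c) : K[X]).natDegree = p := by
        rw [natDegree_sub_C]
        exact FiniteField.X_pow_card_sub_X_natDegree_eq K (by omega)
      have h0 : (X ^ p - X - C (f.eval x - c) : K[X]) ≠ 0 := by
        intro h; rw [h] at hne; simp at hne; omega
      have : Finset.card (((Finset.univ.filter (fun z : K × K => f.eval z.1 - z.2 ^ p + z.2 = c)).filter (fun z => z.1 = x)).image Prod.snd) ≤ p := by
        refine le_trans (card_le_degree_of_subset_roots (p := X ^ p - X - C (f.eval x - c)) ?_) hne.le
        intro y hy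
        rw [mem_roots h0]
        have hy' := hy
        rw [Finset.mem_val] at hy'
        simp only [Finset.mem_image, Finset.mem_filter, Finset.mem_univ, true_and] at hy'
        obtain ⟨z, ⟨hz, rfl⟩, rfl⟩ := hy'
        simp only [IsRoot.def, eval_sub, eval_pow, eval_X, eval_C]
        linear_combination -hz
      rwa [Finset.card_image_of_injOn] at this
      intro z hz w hw h
      simp at hz hw
      exact Prod.ext (hz.2.trans hw.2.symm) h
  have hsum : ∑ c, N c = Q ^ 2 * Q ^ 2 := by
    have := Finset.card_eq_sum_card_fiberwise (s := (Finset.univ : Finset (K × K))) (t := Finset.univ) (f := fun z : K × K => f.eval z.1 - z.2 ^ p + z.2) (by simp)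
    simp only [hN]
    rw [← this]
    simp [hq2]
  have hΨsum : ∑ c, Ψ c * (N c : ℂ) = (Q ^ 2 : ℕ) * ∑ x, Ψ (f.eval x) := by
    have : ∀ c, Ψ c * (N c : ℂ) = ∑ z ∈ Finset.univ.filter (fun z : K × K => f.eval z.1 - z.2 ^ p + z.2 = c), Ψ (f.eval z.1) := by
      intro c
      have : ∀ z ∈ Finset.univ.filter (fun z : K × K => f.eval z.1 - z.2 ^ p + z.2 = c), Ψ (f.eval z.1) = Ψ c := by
        intro z hz
        simp only [Finset.mem_filter, Finset.mem_univ, true_and] at hz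
        rw [← hz, AddChar.map_add_eq_mul, AddChar.map_sub_eq_div, hΨp, div_mul_cancel₀]
        intro h0
        have := AddChar.map_add_eq_mul Ψ z.2 (-z.2)
        simp [h0] at this
      rw [Finset.sum_congr rfl this, Finset.sum_const, nsmul_eq_mul, mul_comm]
    simp only [this]
    refine (Finset.sum_fiberwise (Finset.univ : Finset (K × K)) (fun z => f.eval z.1 - z.2 ^ p + z.2) (fun z => Ψ (f.eval z.1))).trans ?_
    rw [Fintype.sum_prod_type]
    simp [hq2, Finset.mul_sum]
  have h0 : ∑ c, Ψ c = 0 := AddChar.sum_eq_zero_of_ne_one hΨ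
  have hnorm : ∀ c, ‖Ψ c‖ = 1 := fun c => AddChar.norm_apply Ψ c
  have key : ((Q ^ 2 : ℕ) : ℝ) * ‖∑ x, Ψ (f.eval x)‖ ≤ (Q ^ 2 : ℕ) * ((2 * p * n + 1) * Q) := by
    calc ((Q ^ 2 : ℕ) : ℝ) * ‖∑ x, Ψ (f.eval x)‖ = ‖∑ c, Ψ c * ((N c : ℂ) - B)‖ := by
          simp only [mul_sub, Finset.sum_sub_distrib]
          rw [← Finset.sum_mul, h0, hΨsum, zero_mul, sub_zero, norm_mul, Complex.norm_natCast]
      _ ≤ ∑ c, ‖Ψ c * ((N c : ℂ) - B)‖ := norm_sum_le _ _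
      _ = ∑ c, ((B : ℝ) - N c) := by
          apply Finset.sum_congr rfl
          intro c _
          rw [norm_mul, hnorm, one_mul, norm_sub_rev]
          rw [show ((B : ℂ) - N c) = ((B - N c : ℝ) : ℂ) by push_cast; rfl, Complex.norm_real, Real.norm_of_nonneg]
          have := hNB c
          have : (N c : ℝ) ≤ B := by exact_mod_cast this
          linarith
      _ = (Q ^ 2 : ℕ) * ((2 * p * n + 1) * Q) := by
          have hs' : ∑ c, (N c : ℝ) = ((Q ^ 2 * Q ^ 2 : ℕ) : ℝ) := by rw [← hsum]; push_cast; rfl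
          rw [Finset.sum_sub_distrib, hs']
          simp [hq2, hB]
          try ring
  have hQpos : (0 : ℝ) < ((Q ^ 2 : ℕ) : ℝ) := by
    have : 0 < Q := by positivity
    positivity
  have := le_of_mul_le_mul_left key hQpos
  rw [hQ] at this
  exact_mod_cast this
end Stp

end

section
namespace Stp
lemma newton {E : Type*} [CommRing E] (s : Multiset E) (d : ℕ) :
    (d : E) * ((-1) ^ d * s.esymm d) =
      - ∑ i ∈ Finset.range d, ((-1) ^ i * s.esymm i) * (s.map (· ^ (d - i))).sum := by
  let v : Fin s.toList.length → E := s.toList.get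
  have hv : Finset.univ.val.map v = s := by
    have : Multiset.map v Finset.univ.val = (↑(List.ofFn v) : Multiset E) := by
      rw [Fin.univ_val_map]
    rw [this, List.ofFn_get, Multiset.coe_toList]
  have h := congrArg (MvPolynomial.aeval v) (MvPolynomial.mul_esymm_eq_sum (Fin s.toList.length) E d)
  simp only [map_mul, map_natCast, map_sum, map_pow, map_neg, map_one, MvPolynomial.aeval_esymm_eq_multiset_esymm, hv] at h
  have hps : ∀ k, MvPolynomial.aeval v (MvPolynomial.psum (Fin s.toList.length) E k) = (s.map (· ^ k)).sum := by
    intro k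
    rw [MvPolynomial.psum, map_sum]
    conv_rhs => rw [← hv]
    simp [Finset.sum]
    rfl
  simp only [hps] at h
  have h2 : ∑ x ∈ Finset.HasAntidiagonal.antidiagonal d with x.1 < d, (-1) ^ x.1 * s.esymm x.1 * (s.map (· ^ x.2)).sum =
      ∑ i ∈ Finset.range d, ((-1) ^ i * s.esymm i) * (s.map (· ^ (d - i))).sum := by
    rw [Finset.sum_filter, Finset.Nat.sum_antidiagonal_eq_sum_range_succ_mk, Finset.sum_range_succ]
    simp only [lt_irrefl, if_false, add_zero]
    apply Finset.sum_congr rfl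
    intro i hi
    simp [Finset.mem_range.1 hi]
  rw [h2] at h
  rw [mul_left_comm, h, ← mul_assoc, ← pow_add, show d + (d + 1) = 2 * d + 1 by ring, pow_succ, pow_mul]
  simp
end Stp

end

section
namespace Stp

lemma esymm_z {E : Type*} [CommRing E] (s : Multiset E) : s.esymm 0 = 1 := by
  simp [Multiset.esymm]

lemma psum_change {E : Type*} [CommRing E] (s t : Multiset E) (n : ℕ)
    (h : ∀ i < n, (-1 : E) ^ i * s.esymm i = (-1) ^ i * t.esymm i) :
    ∀ j, 1 ≤ j → j < n → (s.map (· ^ j)).sum = (t.map (· ^ j)).sum := by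
  intro j
  induction j using Nat.strong_induction_on with
  | _ j ih =>
    intro h1 hj
    have a := newton s j
    have b := newton t j
    rw [h j hj, b, neg_inj] at a
    obtain ⟨k, rfl⟩ : ∃ k, j = k + 1 := ⟨j - 1, by omega⟩
    rw [Finset.sum_range_succ', Finset.sum_range_succ' _ k] at a
    have e : ∑ i ∈ Finset.range k, (-1 : E) ^ (i + 1) * s.esymm (i + 1) * (s.map (· ^ (k + 1 - (i + 1)))).sum
        = ∑ i ∈ Finset.range k, (-1) ^ (i + 1) * t.esymm (i + 1) * (t.map (· ^ (k + 1 - (i + 1)))).sum := by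
      apply Finset.sum_congr rfl
      intro i hi
      have hi := Finset.mem_range.1 hi
      rw [h (i+1) (by omega), ih (k + 1 - (i + 1)) (by omega) (by omega) (by omega)]
    rw [e] at a
    have := add_left_cancel a
    simpa [esymm_z] using this.symm

lemma psum_change' {E : Type*} [CommRing E] (s t : Multiset E) (n : ℕ) (hn : 1 ≤ n)
    (h : ∀ i < n, (-1 : E) ^ i * s.esymm i = (-1) ^ i * t.esymm i) :
    (s.map (· ^ n)).sum - (t.map (· ^ n)).sum = - n * ((-1) ^ n * s.esymm n - (-1) ^ n * t.esymm n) := by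
  have hh := psum_change s t n h
  have a := newton s n
  have b := newton t n
  obtain ⟨k, rfl⟩ : ∃ k, n = k + 1 := ⟨n - 1, by omega⟩
  rw [Finset.sum_range_succ'] at a b
  have e : ∑ i ∈ Finset.range k, (-1 : E) ^ (i + 1) * s.esymm (i + 1) * (s.map (· ^ (k + 1 - (i + 1)))).sum
        = ∑ i ∈ Finset.range k, (-1) ^ (i + 1) * t.esymm (i + 1) * (t.map (· ^ (k + 1 - (i + 1)))).sum := by
      apply Finset.sum_congr rfl
      intro i hi
      have hi := Finset.mem_range.1 hi
      rw [h (i+1) (by omega), hh (k + 1 - (i + 1)) (by omega) (by omega)]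
  rw [e] at a
  simp only [pow_zero, one_mul, Nat.sub_zero, esymm_z] at a b
  linear_combination a - b

variable {p : ℕ} [Fact p.Prime]

noncomputable def mon (p d : ℕ) : Finset (ZMod p)[X] :=
  if h : p ≠ 0 then
  haveI : NeZero p := ⟨h⟩
  Finset.univ.image (fun a : Fin d → ZMod p => X ^ d + ∑ i : Fin d, C (a i) * X ^ (i : ℕ)) else ∅

lemma mon_def (d : ℕ) : mon p d =
    Finset.univ.image (fun a : Fin d → ZMod p => X ^ d + ∑ i : Fin d, C (a i) * X ^ (i : ℕ)) := by
  rw [mon, dif_pos (Fact.out : p.Prime).ne_zero]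

lemma degree_sum_lt {R : Type*} [CommRing R] (d : ℕ) (a : Fin d → R) :
    (∑ i : Fin d, C (a i) * X ^ (i : ℕ)).degree < (d : WithBot ℕ) := by
  refine lt_of_le_of_lt (degree_sum_le _ _) ?_
  rw [Finset.sup_lt_iff (by exact WithBot.bot_lt_coe d)]
  intro i _
  refine lt_of_le_of_lt (degree_C_mul_X_pow_le _ _) ?_
  exact_mod_cast i.2

lemma mem_mon (d : ℕ) (h : (ZMod p)[X]) : h ∈ mon p d ↔ h.Monic ∧ h.natDegree = d := by
  rw [mon_def]
  simp only [Finset.mem_image, Finset.mem_univ, true_and]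
  constructor
  · rintro ⟨a, rfl⟩
    refine ⟨monic_X_pow_add (degree_sum_lt d a), ?_⟩
    rw [natDegree_add_eq_left_of_degree_lt, natDegree_X_pow]
    rw [degree_X_pow]; exact degree_sum_lt d a
  · rintro ⟨h1, rfl⟩
    refine ⟨fun i => h.coeff i, ?_⟩
    conv_rhs => rw [h1.as_sum]
    rw [Finset.sum_range]

lemma card_mon_le (d : ℕ) : (mon p d).card ≤ p ^ d := by
  rw [mon_def]
  refine Finset.card_image_le.trans ?_
  simp

abbrev Om (p : ℕ) [Fact p.Prime] := AlgebraicClosure (ZMod p)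

noncomputable def chi (f : (ZMod p)[X]) (lam : Om p →ₗ[ZMod p] ZMod p) (ψ : AddChar (ZMod p) ℂ) (h : (ZMod p)[X]) : ℂ :=
  ψ (lam ((h.aroots (Om p)).map (fun α => aeval α f)).sum)

section
variable (f : (ZMod p)[X]) (lam : Om p →ₗ[ZMod p] ZMod p) (ψ : AddChar (ZMod p) ℂ)

lemma chi_mul {g h : (ZMod p)[X]} (hg : g ≠ 0) (hh : h ≠ 0) : chi f lam ψ (g * h) = chi f lam ψ g * chi f lam ψ h := by
  simp only [chi]
  rw [aroots_mul (mul_ne_zero hg hh), Multiset.map_add, Multiset.sum_add, map_add, AddChar.map_add_eq_mul]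

lemma chi_one : chi f lam ψ 1 = 1 := by
  simp [chi]

lemma chi_pow {g : (ZMod p)[X]} (hg : g ≠ 0) (k : ℕ) : chi f lam ψ (g ^ k) = chi f lam ψ g ^ k := by
  induction k with
  | zero => simp [chi_one]
  | succ k ih => rw [pow_succ, chi_mul f lam ψ (pow_ne_zero _ hg) hg, ih, pow_succ]

lemma coeff_esymm (h : (ZMod p)[X]) (hm : h.Monic) (i : ℕ) (hi : i ≤ h.natDegree) :
    (-1) ^ i * (h.aroots (Om p)).esymm i = algebraMap (ZMod p) (Om p) (h.coeff (h.natDegree - i)) := by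
  have hs : (h.map (algebraMap (ZMod p) (Om p))).Splits := IsAlgClosed.splits _
  have := Polynomial.coeff_eq_esymm_roots_of_splits hs (k := h.natDegree - i) (by rw [natDegree_map]; omega)
  rw [coeff_map, (hm.map _).leadingCoeff, natDegree_map, show h.natDegree - (h.natDegree - i) = i by omega] at this
  rw [this, one_mul]

lemma sum_aeval (s : Multiset (Om p)) (n : ℕ) (hf : f.natDegree = n) :
    (s.map (fun α => aeval α f)).sum = ∑ j ∈ Finset.range (n + 1), algebraMap _ _ (f.coeff j) * (s.map (· ^ j)).sum := by
  have : ∀ α : Om p, aeval α f = ∑ j ∈ Finset.range (n + 1), algebraMap _ _ (f.coeff j) * α ^ j := by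
    intro α
    rw [aeval_eq_sum_range, hf]
    simp [Algebra.smul_def]
  simp only [this]
  rw [Multiset.sum_map_sum]
  apply Finset.sum_congr rfl
  intro j _
  rw [Multiset.sum_map_mul_left]

lemma chi_shift (hl : ∀ a, lam (algebraMap _ _ a) = a) (n : ℕ) (hn : 1 ≤ n) (hf : f.natDegree = n) (h : (ZMod p)[X]) (hm : h.Monic)
    (hd : n ≤ h.natDegree) (c : ZMod p) :
    chi f lam ψ (h + C c * X ^ (h.natDegree - n)) = ψ (f.leadingCoeff * (-n * c)) * chi f lam ψ h := by
  set d := h.natDegree with hdd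
  set g := h + C c * X ^ (d - n) with hg
  have hdeg : (C c * X ^ (d - n)).degree < h.degree := by
    refine lt_of_le_of_lt (degree_C_mul_X_pow_le _ _) ?_
    rw [degree_eq_natDegree hm.ne_zero]
    have : d - n < d := by omega
    exact_mod_cast this
  have hgm : g.Monic := hm.add_of_left hdeg
  have hgd : g.natDegree = d := natDegree_add_eq_left_of_degree_lt hdeg
  have hE : ∀ i < n, (-1 : Om p) ^ i * (g.aroots (Om p)).esymm i = (-1) ^ i * (h.aroots (Om p)).esymm i := by
    intro i hi
    rw [coeff_esymm g hgm i (by omega), coeff_esymm h hm i (by omega), hgd, hg, coeff_add, coeff_C_mul, coeff_X_pow, if_neg (by omega)]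
    simp [hdd]
  have h1 := psum_change _ _ n hE
  have h2 := psum_change' _ _ n hn hE
  rw [coeff_esymm g hgm n (by omega), coeff_esymm h hm n (by omega), hgd, ← hdd] at h2
  have h3 : g.coeff (d - n) = h.coeff (d - n) + c := by simp [hg]
  rw [h3, map_add, add_sub_cancel_left] at h2
  have h0 : ((g.aroots (Om p)).map (· ^ 0)).sum = ((h.aroots (Om p)).map (· ^ 0)).sum := by
    have cg : (g.aroots (Om p)).card = d := by
      rw [aroots, splits_iff_card_roots.1 (IsAlgClosed.splits _), natDegree_map, hgd] 
    have ch : (h.aroots (Om p)).card = d := by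
      rw [aroots, splits_iff_card_roots.1 (IsAlgClosed.splits _), natDegree_map]
    simp [cg, ch]
  simp only [chi]
  rw [← AddChar.map_add_eq_mul]
  congr 1
  rw [sum_aeval f _ n hf, sum_aeval f _ n hf, Finset.sum_range_succ, Finset.sum_range_succ]
  rw [show ((g.aroots (Om p)).map (· ^ n)).sum = ((h.aroots (Om p)).map (· ^ n)).sum + (- n * algebraMap _ _ c) by rw [← h2]; ring]
  have : ∑ j ∈ Finset.range n, algebraMap _ _ (f.coeff j) * ((g.aroots (Om p)).map (· ^ j)).sum = ∑ j ∈ Finset.range n, algebraMap _ _ (f.coeff j) * ((h.aroots (Om p)).map (· ^ j)).sum := by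
    apply Finset.sum_congr rfl
    intro j hj
    rcases Nat.eq_zero_or_pos j with rfl | hj0
    · rw [h0]
    · rw [h1 j hj0 (Finset.mem_range.1 hj)]
  rw [this, mul_add, ← add_assoc, map_add lam, add_comm]
  congr 1
  rw [show (algebraMap (ZMod p) (Om p) (f.coeff n) * (-(n : Om p) * algebraMap _ _ c)) = algebraMap _ _ (f.leadingCoeff * (-n * c)) by
    simp [leadingCoeff, hf], hl]

noncomputable def cc (d : ℕ) : ℂ := ∑ h ∈ mon p d, chi f lam ψ h

lemma cc_zero : cc f lam ψ 0 = 1 := by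
  have : mon p 0 = {1} := by
    ext h
    rw [mem_mon, Finset.mem_singleton]
    constructor
    · rintro ⟨a, b⟩; exact a.natDegree_eq_zero.1 b
    · rintro rfl; simp
  rw [cc, this, Finset.sum_singleton, chi_one]

lemma cc_vanish (hl : ∀ a, lam (algebraMap _ _ a) = a) (n : ℕ) (hn : 1 ≤ n) (hf : f.natDegree = n) (hpn : Nat.Coprime p n)
    (hψ : ψ ≠ 1) (d : ℕ) (hd : n ≤ d) : cc f lam ψ d = 0 := by
  obtain ⟨y, hy⟩ : ∃ y, ψ y ≠ 1 := by
    by_contra! h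
    exact hψ (by ext y; simp [h])
  have hn0 : (n : ZMod p) ≠ 0 := by
    rw [Ne, ZMod.natCast_eq_zero_iff]
    intro h
    exact (Fact.out : p.Prime).one_lt.ne' (Nat.Coprime.eq_one_of_dvd hpn h)
  have hlc : f.leadingCoeff ≠ 0 := by
    intro h; rw [leadingCoeff_eq_zero] at h; simp [h] at hf; omega
  set c : ZMod p := - y / (f.leadingCoeff * n) with hc
  have hcy : f.leadingCoeff * (-n * c) = y := by rw [hc]; field_simp
  have key : cc f lam ψ d = ψ y * cc f lam ψ d := by
    have hdeg : ∀ (c : ZMod p) (h : (ZMod p)[X]), h ∈ mon p d → h + C c * X ^ (d - n) ∈ mon p d := by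
      intro c h hh
      rw [mem_mon] at hh ⊢
      have hdeg : (C c * X ^ (d - n)).degree < h.degree := by
        refine lt_of_le_of_lt (degree_C_mul_X_pow_le _ _) ?_
        rw [degree_eq_natDegree hh.1.ne_zero, hh.2]
        have : d - n < d := by omega
        exact_mod_cast this
      exact ⟨hh.1.add_of_left hdeg, by rw [natDegree_add_eq_left_of_degree_lt hdeg, hh.2]⟩
    rw [cc, Finset.mul_sum]
    symm
    refine Finset.sum_bij' (fun h _ => h + C c * X ^ (d - n)) (fun h _ => h + C (-c) * X ^ (d - n)) (fun h hh => hdeg _ _ hh) (fun h hh => hdeg _ _ hh) ?_ ?_ ?_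
    · intro h _; simp
    · intro h _; simp
    · intro h hh
      rw [mem_mon] at hh
      have := chi_shift f lam ψ hl n hn hf h hh.1 (by omega) c
      rw [hcy, hh.2] at this
      exact this.symm
  have : (1 - ψ y) * cc f lam ψ d = 0 := by rw [sub_mul, ← key]; ring
  rcases mul_eq_zero.1 this with h | h
  · exact absurd (sub_eq_zero.1 h).symm hy
  · exact h
end
end Stp

end

section
namespace Stp
variable {p : ℕ} [Fact p.Prime]

noncomputable def OmR (p : ℕ) [Fact p.Prime] (r : ℕ) : Finset (Om p) := (X ^ (p ^ r) - X : (Om p)[X]).roots.toFinset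

lemma int_Om (x : Om p) : IsIntegral (ZMod p) x := Algebra.IsIntegral.isIntegral x

lemma mem_OmR0 (r : ℕ) (hr : 1 ≤ r) (x : Om p) : x ∈ OmR p r ↔ x ^ p ^ r = x := by
  have hp := (Fact.out : p.Prime).one_lt
  have : (X ^ (p ^ r) - X : (Om p)[X]) ≠ 0 := FiniteField.X_pow_card_pow_sub_X_ne_zero _ (by omega) hp
  rw [OmR, Multiset.mem_toFinset, mem_roots this]
  simp [sub_eq_zero]

lemma mem_OmR (r : ℕ) (hr : 1 ≤ r) (x : Om p) : x ∈ OmR p r ↔ (minpoly (ZMod p) x).natDegree ∣ r := by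
  rw [mem_OmR0 r hr, (minpoly.irreducible (int_Om x)).natDegree_dvd_iff_dvd_X_pow_card_pow_sub_X, Nat.card_zmod,
    minpoly.dvd_iff]
  simp [sub_eq_zero]

lemma rootMult (x : Om p) (h : (ZMod p)[X]) (hh : h ≠ 0) (k : ℕ) :
    minpoly (ZMod p) x ^ k ∣ h ↔ k ≤ (h.aroots (Om p)).count x := by
  set π := minpoly (ZMod p) x with hπ
  have hirr : Irreducible π := minpoly.irreducible (int_Om x)
  have hfin : FiniteMultiplicity π h := FiniteMultiplicity.of_not_isUnit hirr.not_isUnit hh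
  obtain ⟨g, hg, hng⟩ := hfin.exists_eq_pow_mul_and_not_dvd
  set j := multiplicity π h
  have hg0 : g ≠ 0 := by rintro rfl; simp at hng
  have hsep : π.Separable := PerfectField.separable_of_irreducible hirr
  have c1 : (π.aroots (Om p)).count x = 1 := by
    apply Multiset.count_eq_one_of_mem
    · exact nodup_roots ((separable_map _).mpr hsep)
    · rw [mem_aroots]; exact ⟨hirr.ne_zero, minpoly.aeval _ _⟩
  have c0 : (g.aroots (Om p)).count x = 0 := by
    rw [Multiset.count_eq_zero, mem_aroots]
    rintro ⟨_, h2⟩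
    exact hng (minpoly.dvd _ _ h2)
  have : (h.aroots (Om p)).count x = j := by
    conv_lhs => rw [hg]
    rw [aroots_mul (by rw [← hg]; exact hh), aroots_pow, Multiset.count_add, Multiset.count_nsmul, c1, c0]
    simp
  rw [this]
  exact hfin.pow_dvd_iff_le_multiplicity

noncomputable def qq (x : Om p) (r : ℕ) : (ZMod p)[X] := minpoly (ZMod p) x ^ (r / (minpoly (ZMod p) x).natDegree)

lemma count_h (d : ℕ) (h : (ZMod p)[X]) (hm : h.Monic) (hd : h.natDegree = d) :
    ∑ r ∈ Finset.Icc 1 d, ((OmR p r).filter (fun x => qq x r ∣ h)).card = d := by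
  set R := (h.aroots (Om p)).toFinset with hR
  have h1 : ∀ r ∈ Finset.Icc 1 d, (OmR p r).filter (fun x => qq x r ∣ h) =
      R.filter (fun x => (minpoly (ZMod p) x).natDegree ∣ r ∧ qq x r ∣ h) := by
    intro r hr
    rw [Finset.mem_Icc] at hr
    ext x
    simp only [Finset.mem_filter, mem_OmR r hr.1]
    constructor
    · rintro ⟨a, b⟩
      refine ⟨?_, a, b⟩
      rw [hR, Multiset.mem_toFinset, mem_aroots]
      refine ⟨hm.ne_zero, ?_⟩
      rw [← minpoly.dvd_iff]
      refine dvd_trans (dvd_pow_self _ ?_) b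
      exact (Nat.div_pos (Nat.le_of_dvd (by omega) a) (minpoly.natDegree_pos (int_Om x))).ne'
    · rintro ⟨_, a, b⟩; exact ⟨a, b⟩
  rw [Finset.sum_congr rfl (fun r hr => by rw [h1 r hr])]
  simp only [Finset.card_filter]
  rw [Finset.sum_comm]
  simp only [← Finset.card_filter]
  have h2 : ∀ x ∈ R, ((Finset.Icc 1 d).filter (fun r => (minpoly (ZMod p) x).natDegree ∣ r ∧ qq x r ∣ h)).card = (h.aroots (Om p)).count x := by
    intro x hx
    set e := (minpoly (ZMod p) x).natDegree with he
    have he0 : 0 < e := minpoly.natDegree_pos (int_Om x)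
    set m := (h.aroots (Om p)).count x with hmm
    have : (Finset.Icc 1 d).filter (fun r => e ∣ r ∧ qq x r ∣ h) = (Finset.Icc 1 m).image (fun k => e * k) := by
      ext r
      simp only [Finset.mem_filter, Finset.mem_Icc, Finset.mem_image]
      constructor
      · rintro ⟨⟨a, b⟩, ⟨k, rfl⟩, h3⟩
        refine ⟨k, ⟨?_, ?_⟩, rfl⟩
        · rcases Nat.eq_zero_or_pos k with rfl | h
          · simp at a
          · exact h
        · rw [qq, ← he, Nat.mul_div_cancel_left _ he0, rootMult _ _ hm.ne_zero] at h3
          exact h3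
      · rintro ⟨k, ⟨a, b⟩, rfl⟩
        have h3 : qq x (e * k) ∣ h := by
          rw [qq, ← he, Nat.mul_div_cancel_left _ he0, rootMult _ _ hm.ne_zero]
          exact b
        refine ⟨⟨Nat.mul_pos he0 a, ?_⟩, dvd_mul_right _ _, h3⟩
        have := natDegree_le_of_dvd h3 hm.ne_zero
        rw [qq, ← he, Nat.mul_div_cancel_left _ he0, natDegree_pow, ← he, hd] at this
        rw [mul_comm]; exact this
    rw [this, Finset.card_image_of_injective _ (fun a b hab => Nat.eq_of_mul_eq_mul_left he0 hab)]
    simp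
  rw [Finset.sum_congr rfl h2, Multiset.toFinset_sum_count_eq]
  rw [aroots, splits_iff_card_roots.1 (IsAlgClosed.splits _), natDegree_map, hd]

section
variable (f : (ZMod p)[X]) (lam : Om p →ₗ[ZMod p] ZMod p) (ψ : AddChar (ZMod p) ℂ)

noncomputable def SS (r : ℕ) : ℂ := ∑ x ∈ OmR p r, chi f lam ψ (qq x r)

lemma qq_monic (x : Om p) (r : ℕ) : (qq x r).Monic := (minpoly.monic (int_Om x)).pow _

lemma qq_deg (x : Om p) (r : ℕ) (hr : 1 ≤ r) (hx : x ∈ OmR p r) : (qq x r).natDegree = r := by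
  rw [qq, natDegree_pow, Nat.div_mul_cancel]
  exact (mem_OmR r hr x).1 hx

lemma inner_sum (d r : ℕ) (hr : r ≤ d) (q : (ZMod p)[X]) (hq : q.Monic) (hqd : q.natDegree = r) :
    ∑ g ∈ mon p (d - r), chi f lam ψ (q * g) = ∑ h ∈ (mon p d).filter (fun h => q ∣ h), chi f lam ψ h := by
  have : (mon p d).filter (fun h => q ∣ h) = (mon p (d - r)).image (fun g => q * g) := by
    ext h
    simp only [Finset.mem_filter, Finset.mem_image, mem_mon]
    constructor
    · rintro ⟨⟨a, b⟩, g, rfl⟩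
      have hg : g.Monic := hq.of_mul_monic_left a
      refine ⟨g, ⟨hg, ?_⟩, rfl⟩
      rw [hq.natDegree_mul hg] at b
      omega
    · rintro ⟨g, ⟨a, b⟩, rfl⟩
      refine ⟨⟨hq.mul a, ?_⟩, dvd_mul_right _ _⟩
      rw [hq.natDegree_mul a]; omega
  rw [this, Finset.sum_image]
  intro a _ b _ hab
  exact mul_left_cancel₀ hq.ne_zero hab

lemma recur (d : ℕ) : (d : ℂ) * cc f lam ψ d = ∑ r ∈ Finset.Icc 1 d, SS f lam ψ r * cc f lam ψ (d - r) := by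
  have h1 : ∀ r ∈ Finset.Icc 1 d, SS f lam ψ r * cc f lam ψ (d - r) =
      ∑ h ∈ mon p d, chi f lam ψ h * (((OmR p r).filter (fun x => qq x r ∣ h)).card : ℂ) := by
    intro r hr
    rw [Finset.mem_Icc] at hr
    rw [SS, Finset.sum_mul]
    have : ∀ x ∈ OmR p r, chi f lam ψ (qq x r) * cc f lam ψ (d - r) = ∑ h ∈ mon p d, if qq x r ∣ h then chi f lam ψ h else 0 := by
      intro x hx
      rw [← Finset.sum_filter, ← inner_sum f lam ψ d r hr.2 _ (qq_monic x r) (qq_deg x r hr.1 hx), cc, Finset.mul_sum]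
      apply Finset.sum_congr rfl
      intro g hg
      rw [mem_mon] at hg
      rw [chi_mul _ _ _ (qq_monic x r).ne_zero hg.1.ne_zero]
    rw [Finset.sum_congr rfl this, Finset.sum_comm]
    apply Finset.sum_congr rfl
    intro h _
    rw [← Finset.sum_filter, Finset.sum_const, nsmul_eq_mul, mul_comm]
  rw [Finset.sum_congr rfl h1, Finset.sum_comm, cc, Finset.mul_sum]
  apply Finset.sum_congr rfl
  intro h hh
  rw [mem_mon] at hh
  rw [← Finset.mul_sum, mul_comm]
  congr 1
  have := count_h d h hh.1 hh.2
  exact_mod_cast this.symm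

lemma trace_term {K : Type*} [Field K] [Fintype K] [Algebra (ZMod p) K] (ι : K →ₐ[ZMod p] Om p) (x : K) :
    algebraMap (ZMod p) (Om p) (Algebra.trace (ZMod p) K (aeval x f)) =
      (((qq (ι x) (Module.finrank (ZMod p) K)).aroots (Om p)).map (fun α => aeval α f)).sum := by
  have hint : IsIntegral (ZMod p) x := Algebra.IsIntegral.isIntegral x
  let L := IntermediateField.adjoin (ZMod p) {x}
  let pb : PowerBasis (ZMod p) L := IntermediateField.adjoin.powerBasis hint
  have hgen : algebraMap L K pb.gen = x := by
    simp [pb]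
  have hmp : minpoly (ZMod p) pb.gen = minpoly (ZMod p) (ι x) := by
    rw [← hgen, minpoly.algHom_eq ι ι.injective, minpoly.algebraMap_eq (algebraMap L K).injective]
  have hdim : pb.dim = (minpoly (ZMod p) (ι x)).natDegree := by
    rw [← hmp, pb.natDegree_minpoly]
  have hfr : Module.finrank (ZMod p) L * Module.finrank L K = Module.finrank (ZMod p) K := Module.finrank_mul_finrank _ _ _
  rw [pb.finrank, hdim] at hfr
  have hk : Module.finrank (ZMod p) K / (minpoly (ZMod p) (ι x)).natDegree = Module.finrank L K := by
    rw [← hfr, Nat.mul_div_cancel_left _ (minpoly.natDegree_pos (int_Om _))]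
  have h1 : aeval x f = algebraMap L K (aeval pb.gen f) := by
    rw [← hgen, aeval_algebraMap_apply]
  rw [h1, ← Algebra.trace_trace (S := L), Algebra.trace_algebraMap, qq, hk, aroots_pow, Multiset.map_nsmul, Multiset.sum_nsmul,
    map_nsmul, map_nsmul]
  congr 1
  rw [trace_eq_sum_embeddings (Om p), ← hmp]
  have hsep : (minpoly (ZMod p) pb.gen).Separable := PerfectField.separable_of_irreducible (minpoly.irreducible (Algebra.IsIntegral.isIntegral _))
  have hnd : ((minpoly (ZMod p) pb.gen).aroots (Om p)).Nodup := nodup_roots ((separable_map _).mpr hsep)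
  rw [Fintype.sum_equiv pb.liftEquiv' _ (fun y => aeval (y : Om p) f)]
  · rw [Finset.sum_mem_multiset (f := fun y => aeval (y : Om p) f) (g := fun y => aeval y f) , Finset.sum_eq_multiset_sum, Multiset.toFinset_val, Multiset.dedup_eq_self.mpr hnd]
    intro x; rfl
  · intro σ
    rw [PowerBasis.liftEquiv'_apply_coe, ← Polynomial.aeval_algHom_apply]

lemma SS_eq (hl : ∀ a, lam (algebraMap _ _ a) = a) {K : Type*} [Field K] [Fintype K] [Algebra (ZMod p) K] (r : ℕ) (hr : 1 ≤ r)
    (hK : Module.finrank (ZMod p) K = r) :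
    SS f lam ψ r = ∑ x : K, ψ (Algebra.trace (ZMod p) K (aeval x f)) := by
  let ι : K →ₐ[ZMod p] Om p := IsAlgClosed.lift
  have hinj : Function.Injective ι := ι.injective
  have hcard : Fintype.card K = p ^ r := by
    rw [← hK, ← FiniteField.pow_finrank_eq_card p K]
  have him : OmR p r = Finset.univ.image ι := by
    symm
    apply Finset.eq_of_subset_of_card_le
    · intro y hy
      simp only [Finset.mem_image, Finset.mem_univ, true_and] at hy
      obtain ⟨x, rfl⟩ := hy
      rw [mem_OmR0 r hr, ← map_pow, ← hcard, FiniteField.pow_card]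
    · rw [Finset.card_image_of_injective _ hinj, Finset.card_univ, hcard, OmR]
      refine (Multiset.toFinset_card_le _).trans ((card_roots' _).trans ?_)
      rw [FiniteField.X_pow_card_pow_sub_X_natDegree_eq _ (by omega) (Fact.out : p.Prime).one_lt]
  rw [SS, him, Finset.sum_image (fun a _ b _ h => hinj h)]
  apply Finset.sum_congr rfl
  intro x _
  rw [chi, ← hK, ← trace_term f ι x, hl]
end
end Stp

end

section
namespace Stp

lemma root_bound (W : Multiset ℂ) (M : ℝ) (t0 : ℕ) (h : ∀ t, t0 ≤ t → ‖(W.map (· ^ t)).sum‖ ≤ M) (z : ℂ) (hz : z ∈ W) :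
    ‖z‖ ≤ 1 := by
  by_contra! hgt
  set l : ℂ[X] := ∏ y ∈ W.toFinset.erase z, (X - C y) with hl
  have hlz : l.eval z ≠ 0 := by
    rw [hl, eval_prod, Finset.prod_ne_zero_iff]
    intro y hy
    simp only [eval_sub, eval_X, eval_C]
    rw [sub_ne_zero]
    exact (Finset.ne_of_mem_erase hy).symm
  have hl0 : ∀ y ∈ W, y ≠ z → l.eval y = 0 := by
    intro y hy hyz
    rw [hl, eval_prod, Finset.prod_eq_zero_iff]
    exact ⟨y, Finset.mem_erase.2 ⟨hyz, Multiset.mem_toFinset.2 hy⟩, by simp⟩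
  set B := ∑ k ∈ Finset.range (l.natDegree + 1), ‖l.coeff k‖ * M with hB
  have key : ∀ t, t0 ≤ t → (W.count z : ℝ) * ‖z‖ ^ t * ‖l.eval z‖ ≤ B := by
    intro t ht
    have e1 : (W.map (fun y => y ^ t * l.eval y)).sum = W.count z * (z ^ t * l.eval z) := by
      rw [Finset.sum_multiset_map_count, Finset.sum_eq_single z]
      · simp
      · intro y hy hyz
        rw [hl0 y (Multiset.mem_toFinset.1 hy) hyz]; simp
      · intro h; exact absurd (Multiset.mem_toFinset.2 hz) h
    have e2 : (W.map (fun y => y ^ t * l.eval y)).sum = ∑ k ∈ Finset.range (l.natDegree + 1), l.coeff k * (W.map (· ^ (t + k))).sum := by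
      have : ∀ y : ℂ, y ^ t * l.eval y = ∑ k ∈ Finset.range (l.natDegree + 1), l.coeff k * y ^ (t + k) := by
        intro y
        rw [eval_eq_sum_range, Finset.mul_sum]
        apply Finset.sum_congr rfl
        intro k _
        ring
      simp only [this]
      rw [Multiset.sum_map_sum]
      apply Finset.sum_congr rfl
      intro j _
      rw [Multiset.sum_map_mul_left]
    have e3 : (W.count z : ℝ) * ‖z‖ ^ t * ‖l.eval z‖ = ‖(W.map (fun y => y ^ t * l.eval y)).sum‖ := by
      rw [e1]; simp [mul_assoc]
    rw [e3, e2]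
    refine (norm_sum_le _ _).trans (Finset.sum_le_sum ?_)
    intro k _
    rw [norm_mul]
    exact mul_le_mul_of_nonneg_left (h _ (by omega)) (norm_nonneg _)
  have hc : (1 : ℝ) ≤ W.count z := by exact_mod_cast Multiset.one_le_count_iff_mem.2 hz
  have hlp : 0 < ‖l.eval z‖ := norm_pos_iff.2 hlz
  obtain ⟨m, hm⟩ := pow_unbounded_of_one_lt (B / ‖l.eval z‖) hgt
  have h1 := key (m + t0) (by omega)
  have h2 : ‖z‖ ^ m ≤ ‖z‖ ^ (m + t0) := pow_le_pow_right₀ hgt.le (by omega)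
  rw [div_lt_iff₀ hlp] at hm
  have : ‖z‖ ^ m * ‖l.eval z‖ ≤ (W.count z : ℝ) * ‖z‖ ^ (m + t0) * ‖l.eval z‖ := by
    apply mul_le_mul_of_nonneg_right _ hlp.le
    nlinarith [pow_nonneg (norm_nonneg z) (m + t0)]
  linarith

lemma roots_of_recur (n : ℕ) (hn : 1 ≤ n) (c S : ℕ → ℂ) (c0 : c 0 = 1) (cv : ∀ d, n ≤ d → c d = 0)
    (hrec : ∀ d : ℕ, (d : ℂ) * c d = ∑ r ∈ Finset.Icc 1 d, S r * c (d - r)) :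
    ∃ w : Multiset ℂ, w.card = n - 1 ∧ ∀ r, 1 ≤ r → S r = - (w.map (· ^ r)).sum := by
  set G : ℂ[X] := X ^ (n - 1) + ∑ i : Fin (n - 1), C (c (n - 1 - i)) * X ^ (i : ℕ) with hG
  have hGm : G.Monic := monic_X_pow_add (degree_sum_lt _ (fun i : Fin (n - 1) => c (n - 1 - i)))
  have hGd : G.natDegree = n - 1 := by
    rw [hG, natDegree_add_eq_left_of_degree_lt, natDegree_X_pow]
    rw [degree_X_pow]; exact degree_sum_lt _ (fun i : Fin (n - 1) => c (n - 1 - i))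
  have hGc : ∀ i, i ≤ n - 1 → G.coeff i = c (n - 1 - i) := by
    intro i hi
    rw [hG, coeff_add, finsetSum_coeff]
    simp only [coeff_C_mul, coeff_X_pow]
    rcases hi.lt_or_eq with h | rfl
    · rw [Finset.sum_eq_single ⟨i, h⟩]
      · simp [h.ne]
      · intro j _ hj
        rw [if_neg, mul_zero]
        intro h'; exact hj (Fin.ext h'.symm)
      · simp
    · rw [Finset.sum_eq_zero]
      · simp [c0]
      · intro j _
        have := j.2
        rw [if_neg (by omega), mul_zero]
  have hs : G.Splits := IsAlgClosed.splits _
  have hcard : G.roots.card = n - 1 := by rw [splits_iff_card_roots.1 hs, hGd]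
  have hE : ∀ d, (-1) ^ d * G.roots.esymm d = c d := by
    intro d
    rcases Nat.lt_or_ge d n with h | h
    · have := Polynomial.coeff_eq_esymm_roots_of_splits hs (k := n - 1 - d) (by omega)
      rw [hGc _ (by omega), hGm.leadingCoeff, hGd, show n - 1 - (n - 1 - d) = d by omega] at this
      rw [this, one_mul]
    · rw [cv d h, Multiset.esymm, Multiset.powersetCard_eq_empty _ (by omega)]
      simp
  refine ⟨G.roots, hcard, ?_⟩
  intro r
  induction r using Nat.strong_induction_on with
  | _ r ih =>
    intro hr
    have a := newton G.roots r
    have b := hrec r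
    simp only [hE] at a
    rw [a] at b
    obtain ⟨k, rfl⟩ : ∃ k, r = k + 1 := ⟨r - 1, by omega⟩
    rw [Finset.sum_Icc_succ_top (by omega), Finset.sum_range_succ'] at b
    have e : ∑ i ∈ Finset.range k, c (i + 1) * (G.roots.map (· ^ (k + 1 - (i + 1)))).sum = - ∑ r ∈ Finset.Icc 1 k, S r * c (k + 1 - r) := by
      rw [← Finset.sum_neg_distrib]
      symm
      apply Finset.sum_bij' (fun r _ => k - r) (fun i _ => k - i)
      · intro r hr; rw [Finset.mem_Icc] at hr; rw [Finset.mem_range]; omega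
      · intro r hr; rw [Finset.mem_range] at hr; rw [Finset.mem_Icc]; omega
      · intro r hr; rw [Finset.mem_Icc] at hr; omega
      · intro r hr; rw [Finset.mem_range] at hr; omega
      · intro r hr
        rw [Finset.mem_Icc] at hr
        rw [ih r (by omega) hr.1, show k - r + 1 = k + 1 - r by omega, show k + 1 - (k + 1 - r) = r by omega]
        ring
    rw [e] at b
    simp only [c0, Nat.sub_self, Nat.sub_zero] at b
    linear_combination - b

variable {p : ℕ} [Fact p.Prime]

theorem weilK {K : Type*} [Field K] [Fintype K] [Algebra (ZMod p) K] [CharP K p] (f : (ZMod p)[X]) (ψ : AddChar (ZMod p) ℂ) (hψ : ψ ≠ 1) (n : ℕ) (hn : 1 ≤ n) (hpn : Nat.Coprime p n)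
    (hf : f.natDegree = n) (s : ℕ) (hs : 4 * (n + 1) ^ 2 * p ≤ s) (hcard : Fintype.card K = p ^ (2 * (s + 1))) :
    ‖∑ x : K, ψ (Algebra.trace (ZMod p) K (aeval x f))‖ ≤ (2 * p * n + 1) * (p : ℝ) ^ (s + 1) := by
    have hp := (Fact.out : p.Prime)
    set Ψ : AddChar K ℂ := ψ.compAddMonoidHom (Algebra.trace (ZMod p) K).toAddMonoidHom with hΨ
    have hΨ1 : Ψ ≠ 1 := by
      obtain ⟨y, hy⟩ : ∃ y, ψ y ≠ 1 := by
        by_contra! h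
        exact hψ (by ext y; simp [h])
      obtain ⟨x, hx⟩ := Algebra.trace_surjective (ZMod p) K y
      intro h
      have := DFunLike.congr_fun h x
      rw [hΨ] at this
      simp [hx] at this
      exact hy this
    have hΨp : ∀ y, Ψ (y ^ p) = Ψ y := by
      intro y
      simp only [hΨ, AddChar.compAddMonoidHom_apply]
      congr 1
      have := Algebra.trace_eq_of_algEquiv (FiniteField.frobeniusAlgEquivOfAlgebraic (ZMod p) K) y
      simpa using this
    have := charsum_K (K := K) (p := p) (s := s) (n := n) hn hpn hcard (hs.trans (Nat.lt_pow_self hp.one_lt).le)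
      (f.map (algebraMap _ _)) (by rw [natDegree_map, hf]) Ψ hΨ1 hΨp
    simp only [eval_map_algebraMap] at this
    exact this

theorem weil (f : (ZMod p)[X]) (ψ : AddChar (ZMod p) ℂ) (hψ : ψ ≠ 1) (n : ℕ) (hn : 1 ≤ n) (hpn : Nat.Coprime p n)
    (hf : f.natDegree = n) : ‖∑ x, ψ (f.eval x)‖ ≤ n * Real.sqrt p := by
  have hp := (Fact.out : p.Prime)
  obtain ⟨lam, hlam⟩ := LinearMap.exists_leftInverse_of_injective (Algebra.linearMap (ZMod p) (Om p))
    (LinearMap.ker_eq_bot.2 (algebraMap (ZMod p) (Om p)).injective)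
  have hl : ∀ a, lam (algebraMap _ _ a) = a := fun a => LinearMap.congr_fun hlam a
  obtain ⟨w, hw, hS⟩ := roots_of_recur n hn (cc f lam ψ) (SS f lam ψ) (cc_zero _ _ _)
    (cc_vanish f lam ψ hl n hn hf hpn hψ) (recur f lam ψ)
  have hbig : ∀ s, 4 * (n + 1) ^ 2 * p ≤ s → ‖(w.map (· ^ (2 * (s + 1)))).sum‖ ≤ (2 * p * n + 1) * (p : ℝ) ^ (s + 1) := by
    intro s hs
    have h0 : 2 * (s + 1) ≠ 0 := by omega
    letI : Fintype (GaloisField p (2 * (s + 1))) := Fintype.ofFinite _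
    have hfr : Module.finrank (ZMod p) (GaloisField p (2 * (s + 1))) = 2 * (s + 1) := GaloisField.finrank p h0
    have h1 := SS_eq f lam ψ hl (K := GaloisField p (2 * (s + 1))) (2 * (s + 1)) (by omega) hfr
    rw [hS _ (by omega)] at h1
    rw [← norm_neg, h1]
    exact weilK f ψ hψ n hn hpn hf s hs (by rw [← Nat.card_eq_fintype_card, GaloisField.card p _ h0])
  have hp0 : (0 : ℝ) < p := by exact_mod_cast hp.pos
  have hroot : ∀ z ∈ w, ‖z‖ ≤ Real.sqrt p := by
    intro z hz
    have := root_bound (w.map (fun z => z ^ 2 / p)) (2 * p * n + 1) (4 * (n + 1) ^ 2 * p + 1) (by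
      intro t ht
      obtain ⟨s, rfl⟩ : ∃ s, t = s + 1 := ⟨t - 1, by omega⟩
      have h := hbig s (by omega)
      rw [Multiset.map_map]
      have e : ((w.map ((· ^ (s + 1)) ∘ fun z => z ^ 2 / (p : ℂ))).sum) = (w.map (· ^ (2 * (s + 1)))).sum / (p : ℂ) ^ (s + 1) := by
        rw [← Multiset.sum_map_div]
        congr 1
        apply Multiset.map_congr rfl
        intro z _
        simp [div_pow, pow_mul]
      rw [e, norm_div, div_le_iff₀ (by simp [hp.pos])]
      simpa using h) (z ^ 2 / p) (Multiset.mem_map_of_mem _ hz)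
    rw [norm_div, norm_pow, Complex.norm_natCast, div_le_one hp0] at this
    exact Real.le_sqrt_of_sq_le this
  have h1 := SS_eq f lam ψ hl (K := ZMod p) 1 le_rfl (Module.finrank_self _)
  rw [hS 1 le_rfl] at h1
  have h2 : ∑ x, ψ (f.eval x) = -(w.map (· ^ 1)).sum := by
    rw [h1]
    apply Finset.sum_congr rfl
    intro x _
    simp [Algebra.trace_self_apply, coe_aeval_eq_eval]
  rw [h2, norm_neg]
  refine (norm_multiset_sum_le _).trans ?_
  rw [Multiset.map_map]
  refine (Multiset.sum_le_card_nsmul _ (Real.sqrt p) ?_).trans ?_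
  · intro x hx
    rw [Multiset.mem_map] at hx
    obtain ⟨z, hz, rfl⟩ := hx
    simpa using hroot z hz
  · rw [Multiset.card_map, hw, nsmul_eq_mul]
    apply mul_le_mul_of_nonneg_right _ (Real.sqrt_nonneg _)
    exact_mod_cast Nat.sub_le n 1
end Stp

end

section
namespace Stp
variable {p : ℕ} [Fact p.Prime] {n : ℕ}

noncomputable def pol {F : Type*} [CommRing F] (a : Fin n → F) : F[X] :=
  X ^ n + ∑ i : Fin n, C (a i) * X ^ (n - 1 - (i : ℕ))

lemma pol_eq {F : Type*} [CommRing F] (a : Fin n → F) : pol a = X ^ n + ∑ i : Fin n, C (a (Fin.rev i)) * X ^ (i : ℕ) := by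
  rw [pol]
  congr 1
  apply Fintype.sum_equiv Fin.revPerm
  intro i
  simp only [Fin.revPerm_apply, Fin.rev_rev]
  congr 2
  rw [Fin.val_rev]; omega

lemma pol_monic {F : Type*} [CommRing F] (a : Fin n → F) : (pol a).Monic := by
  rw [pol_eq]
  exact monic_X_pow_add (degree_sum_lt n (fun i => a (Fin.rev i)))

lemma pol_natDegree {F : Type*} [Field F] (a : Fin n → F) : (pol a).natDegree = n := by
  rw [pol_eq, natDegree_add_eq_left_of_degree_lt, natDegree_X_pow]
  rw [degree_X_pow]; exact degree_sum_lt n (fun i => a (Fin.rev i))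

lemma pol_coeff {F : Type*} [CommRing F] (a : Fin n → F) (i : Fin n) : (pol a).coeff (n - 1 - i) = a i := by
  have := i.2
  rw [pol, coeff_add, finsetSum_coeff]
  simp only [coeff_C_mul, coeff_X_pow]
  rw [if_neg (by omega), Finset.sum_eq_single i]
  · simp
  · intro j _ hj
    rw [if_neg, mul_zero]
    intro h; apply hj; ext; have := j.2; omega
  · simp

lemma pol_inj {F : Type*} [CommRing F] : Function.Injective (pol : (Fin n → F) → F[X]) := by
  intro a b h
  funext i
  rw [← pol_coeff a i, h, pol_coeff]

lemma pol_surj {F : Type*} [CommRing F] (h : F[X]) (hm : h.Monic) (hd : h.natDegree = n) :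
    pol (fun i : Fin n => h.coeff (n - 1 - i)) = h := by
  conv_rhs => rw [hm.as_sum, hd]
  rw [pol_eq, Finset.sum_range]
  congr 1
  apply Finset.sum_congr rfl
  intro i _
  congr 3
  rw [Fin.val_rev]; have := i.2; omega

noncomputable def Sk (p : ℕ) [Fact p.Prime] (n k : ℕ) : Finset (Fin n → ZMod p) :=
  Finset.univ.filter (fun a => k ≤ polyIndexOver (ZMod p) (pol a))

noncomputable def TT' (t : ZMod p) (a : Fin n → ZMod p) : Fin n → ZMod p := fun i => (taylor t (pol a)).coeff (n - 1 - i)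

lemma pol_TT (t : ZMod p) (a : Fin n → ZMod p) : pol (TT' t a) = taylor t (pol a) := by
  apply pol_surj
  · rw [Monic, leadingCoeff_taylor]; exact pol_monic a
  · rw [natDegree_taylor, pol_natDegree]

lemma TT_TT (t : ZMod p) (a : Fin n → ZMod p) : TT' (-t) (TT' t a) = a := by
  apply pol_inj
  rw [pol_TT, pol_TT, taylor_taylor]
  simp

lemma card_roots_taylor {F : Type*} [Field F] (P : F[X]) (t : F) : (taylor t P).roots.toFinset.card = P.roots.toFinset.card := by
  rcases eq_or_ne P 0 with rfl | hP
  · simp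
  have hT : taylor t P ≠ 0 := by rw [Ne, taylor_eq_zero]; exact hP
  have : (taylor t P).roots.toFinset = P.roots.toFinset.image (fun x => x - t) := by
    ext x
    simp only [Multiset.mem_toFinset, Finset.mem_image, mem_roots hP, mem_roots hT, IsRoot.def, taylor_eval]
    constructor
    · intro h; exact ⟨x + t, h, by ring⟩
    · rintro ⟨y, h, rfl⟩; simpa using h
  rw [this, Finset.card_image_of_injective _ (sub_left_injective)]

lemma index_TT (t : ZMod p) (a : Fin n → ZMod p) :
    polyIndexOver (ZMod p) (pol (TT' t a)) = polyIndexOver (ZMod p) (pol a) := by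
  rw [pol_TT, polyIndexOver, polyIndexOver, natDegree_taylor, map_taylor, card_roots_taylor]

noncomputable def QQ (g a : Fin n → ZMod p) : (ZMod p)[X] := ∑ i : Fin n, C (g i) * hasseDeriv (n - 1 - i) (pol a)

lemma QQ_eval (g a : Fin n → ZMod p) (t : ZMod p) : (QQ g a).eval t = ∑ i, g i * TT' t a i := by
  rw [QQ, eval_finsetSum]
  apply Finset.sum_congr rfl
  intro i _
  rw [eval_mul, eval_C, TT', taylor_coeff]

lemma QQ_deg (g a : Fin n → ZMod p) (hg : g ≠ 0) (hnp : n < p) : ∃ d, 1 ≤ d ∧ d ≤ n ∧ (QQ g a).natDegree = d := by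
  have hne : (Finset.univ.filter (fun i => g i ≠ 0)).Nonempty := by
    obtain ⟨i, hi⟩ := Function.ne_iff.1 hg
    exact ⟨i, by simpa using hi⟩
  set i0 := (Finset.univ.filter (fun i => g i ≠ 0)).max' hne with hi0
  have h0 : g i0 ≠ 0 := by
    have := Finset.max'_mem _ hne
    simpa using this
  have hmax : ∀ i, i0 < i → g i = 0 := by
    intro i hi
    by_contra h
    have := Finset.le_max' (Finset.univ.filter (fun i => g i ≠ 0)) i (by simpa using h)
    exact absurd hi (not_lt.2 this)
  have hi0n := i0.2
  refine ⟨i0 + 1, by omega, by omega, ?_⟩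
  apply natDegree_eq_of_le_of_coeff_ne_zero
  · rw [natDegree_le_iff_coeff_eq_zero]
    intro N hN
    rw [QQ, finsetSum_coeff]
    apply Finset.sum_eq_zero
    intro i _
    rw [coeff_C_mul, hasseDeriv_coeff]
    rcases lt_or_ge i0 i with h | h
    · rw [hmax i h, zero_mul]
    · have h' : (i : ℕ) ≤ i0 := h
      rw [coeff_eq_zero_of_natDegree_lt (p := pol a) (by rw [pol_natDegree]; omega)]; simp
  · rw [QQ, finsetSum_coeff, Finset.sum_eq_single i0]
    · rw [coeff_C_mul, hasseDeriv_coeff, show (i0 : ℕ) + 1 + (n - 1 - i0) = n by omega]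
      have : (pol a).coeff n = 1 := by
        have := pol_monic a
        rw [Monic, leadingCoeff, pol_natDegree] at this; exact this
      rw [this, mul_one]
      apply mul_ne_zero h0
      rw [Ne, ZMod.natCast_eq_zero_iff]
      intro hd
      have := Nat.choose_le_succ
      have h1 : p ∣ n.factorial := hd.trans ⟨_, by
        rw [← Nat.choose_mul_factorial_mul_factorial (show n - 1 - i0 ≤ n by omega), mul_assoc]⟩
      rw [(Fact.out : p.Prime).dvd_factorial] at h1
      omega
    · intro i _ hi
      rw [coeff_C_mul, hasseDeriv_coeff]
      rcases lt_or_ge i0 i with h | h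
      · rw [hmax i h, zero_mul]
      · have h' : (i : ℕ) < i0 := lt_of_le_of_ne (show (i : ℕ) ≤ i0 from h) (fun h => hi (Fin.ext h))
        rw [coeff_eq_zero_of_natDegree_lt (p := pol a) (by rw [pol_natDegree]; omega)]; simp
    · simp

theorem fourier_bound (k : ℕ) (hn : 1 ≤ n) (g : Fin n → ZMod p) (hg : g ≠ 0) (ψ : AddChar (ZMod p) ℂ) (hψ : ψ ≠ 1) :
    ‖∑ a ∈ Sk p n k, ψ (∑ i, g i * a i)‖ ≤ (Sk p n k).card * (n / Real.sqrt p) := by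
  have hp := (Fact.out : p.Prime)
  have hp0 : (0 : ℝ) < p := by exact_mod_cast hp.pos
  have hsp : 0 < Real.sqrt p := Real.sqrt_pos.2 hp0
  rcases Nat.lt_or_ge n p with hnp | hnp
  · have h1 : ∀ t : ZMod p, ∑ a ∈ Sk p n k, ψ (∑ i, g i * a i) = ∑ a ∈ Sk p n k, ψ ((QQ g a).eval t) := by
      intro t
      symm
      refine Finset.sum_bij' (fun a _ => TT' t a) (fun a _ => TT' (-t) a) ?_ ?_ ?_ ?_ ?_
      · intro a ha
        simp only [Sk, Finset.mem_filter, Finset.mem_univ, true_and] at ha ⊢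
        rwa [index_TT]
      · intro a ha
        simp only [Sk, Finset.mem_filter, Finset.mem_univ, true_and] at ha ⊢
        rwa [index_TT]
      · intro a _; exact TT_TT t a
      · intro a _; simpa using TT_TT (-t) a
      · intro a _; rw [QQ_eval]
    have h2 : (p : ℂ) * ∑ a ∈ Sk p n k, ψ (∑ i, g i * a i) = ∑ a ∈ Sk p n k, ∑ t, ψ ((QQ g a).eval t) := by
      rw [Finset.sum_comm, ← Finset.sum_congr rfl (fun t _ => h1 t)]
      simp
    have h3 : (p : ℝ) * ‖∑ a ∈ Sk p n k, ψ (∑ i, g i * a i)‖ ≤ (Sk p n k).card * (n * Real.sqrt p) := by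
      have : (p : ℝ) * ‖∑ a ∈ Sk p n k, ψ (∑ i, g i * a i)‖ = ‖(p : ℂ) * ∑ a ∈ Sk p n k, ψ (∑ i, g i * a i)‖ := by
        rw [norm_mul, Complex.norm_natCast]
      rw [this, h2, ← nsmul_eq_mul]
      refine (norm_sum_le _ _).trans (Finset.sum_le_card_nsmul _ _ _ ?_)
      intro a _
      obtain ⟨d, hd1, hdn, hd⟩ := QQ_deg g a hg hnp
      refine (weil (QQ g a) ψ hψ d hd1 ?_ hd).trans ?_
      · exact ((Nat.Prime.coprime_iff_not_dvd hp).2 (fun h => by have := Nat.le_of_dvd (by omega) h; omega))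
      · apply mul_le_mul_of_nonneg_right _ hsp.le
        exact_mod_cast hdn
    rw [← le_div_iff₀' hp0] at h3
    refine h3.trans (le_of_eq ?_)
    rw [mul_div_assoc]
    congr 1
    rw [div_eq_div_iff hp0.ne' hsp.ne', mul_assoc, Real.mul_self_sqrt hp0.le]
  · refine (norm_sum_le _ _).trans ?_
    simp only [AddChar.norm_apply, Finset.sum_const, nsmul_eq_mul, mul_one]
    apply le_mul_of_one_le_right (by positivity)
    rw [one_le_div hsp, Real.sqrt_le_left (by positivity)]
    have : (p : ℝ) ≤ n := by exact_mod_cast hnp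
    have h1 : (1 : ℝ) ≤ n := by exact_mod_cast hn
    nlinarith
end Stp

end

section
open UniqueFactorizationMonoid
namespace Stp
variable {p : ℕ} [Fact p.Prime] {n : ℕ}

lemma monic_of_nf (f q : (ZMod p)[X]) (hq : q ∈ normalizedFactors f) : q.Monic := by
  have h1 := normalize_normalized_factor q hq
  have h0 := (irreducible_of_normalized_factor q hq).ne_zero
  rw [← h1]
  exact Polynomial.monic_normalize h0

lemma card_nf_le (g : (ZMod p)[X]) (hg : g.Monic) : (normalizedFactors g).card ≤ g.natDegree := by
  have h1 : (normalizedFactors g).prod = g := by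
    rw [prod_normalizedFactors_eq hg.ne_zero, hg.normalize_eq_self]
  conv_rhs => rw [← h1]
  rw [natDegree_multiset_prod_of_monic _ (fun q hq => monic_of_nf g q hq)]
  have : ∀ q ∈ (normalizedFactors g).map natDegree, 1 ≤ q := by
    intro q hq
    rw [Multiset.mem_map] at hq
    obtain ⟨r, hr, rfl⟩ := hq
    exact (irreducible_of_normalized_factor r hr).natDegree_pos
  have := Multiset.card_nsmul_le_sum this
  simpa using this

lemma rad_monic (f : (ZMod p)[X]) : (radical f).Monic := by
  rw [radical]
  apply monic_prod_of_monic
  intro q hq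
  exact monic_of_nf f q (mem_primeFactors.1 hq)

lemma rad_deg (a : Fin n → ZMod p) : (radical (pol a)).natDegree ≤ ((pol a).aroots (Om p)).toFinset.card := by
  set g := radical (pol a)
  have hs : g.Separable := PerfectField.separable_iff_squarefree.2 squarefree_radical
  have hnd : (g.aroots (Om p)).Nodup := nodup_roots ((separable_map _).mpr hs)
  have hc : (g.aroots (Om p)).toFinset.card = g.natDegree := by
    rw [Multiset.toFinset_card_of_nodup hnd, aroots, splits_iff_card_roots.1 (IsAlgClosed.splits _), natDegree_map]
  rw [← hc]
  apply Finset.card_le_card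
  intro x hx
  rw [Multiset.mem_toFinset, mem_aroots] at hx ⊢
  refine ⟨(pol_monic a).ne_zero, ?_⟩
  obtain ⟨h, hh⟩ : g ∣ pol a := radical_dvd_self
  rw [hh, map_mul, hx.2, zero_mul]

lemma fiber_card (n : ℕ) (g : (ZMod p)[X]) (hg : g.Monic) (hgn : g.natDegree ≤ n) (T : Finset (ZMod p)[X])
    (hT : ∀ f ∈ T, f.Monic ∧ f.natDegree ≤ n ∧ radical f = g) : T.card ≤ 2 ^ (n * n) := by
  have h1 : T.card = (T.image normalizedFactors).card := by
    rw [Finset.card_image_of_injOn]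
    intro a ha b hb hab
    have e : ∀ f ∈ T, (normalizedFactors f).prod = f := fun f hf => by
      rw [prod_normalizedFactors_eq (hT f hf).1.ne_zero, (hT f hf).1.normalize_eq_self]
    rw [← e a ha, hab, e b hb]
  rw [h1]
  have h2 : T.image normalizedFactors ⊆ (n • normalizedFactors g).powerset.toFinset := by
    intro s hs
    rw [Finset.mem_image] at hs
    obtain ⟨f, hf, rfl⟩ := hs
    obtain ⟨hm, hd, hr⟩ := hT f hf
    rw [Multiset.mem_toFinset, Multiset.mem_powerset, Multiset.le_iff_count]
    intro q
    rw [Multiset.count_nsmul]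
    by_cases hq : q ∈ normalizedFactors f
    · have h3 : q ∈ normalizedFactors g := by
        rw [← mem_primeFactors, ← hr, primeFactors_radical, mem_primeFactors]; exact hq
      have h4 := Multiset.one_le_count_iff_mem.2 h3
      have h5 := Multiset.count_le_card q (normalizedFactors f)
      have h6 := card_nf_le f hm
      nlinarith
    · rw [Multiset.count_eq_zero_of_notMem hq]; omega
  refine (Finset.card_le_card h2).trans ((Multiset.toFinset_card_le _).trans ?_)
  rw [Multiset.card_powerset, Multiset.card_nsmul]
  apply Nat.pow_le_pow_right (by norm_num)
  exact Nat.mul_le_mul_left _ ((card_nf_le g hg).trans hgn)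

theorem density (k : ℕ) : (Sk p n k).card * p ^ k ≤ 2 ^ (n * n) * (n + 1) * p ^ n := by
  have hp := (Fact.out : p.Prime)
  have hroots : ∀ a ∈ Sk p n k, k ≤ n ∧ (radical (pol a)).natDegree ≤ n - k := by
    intro a ha
    simp only [Sk, Finset.mem_filter, Finset.mem_univ, true_and] at ha
    rw [polyIndexOver, pol_natDegree] at ha
    have h1 := rad_deg a
    have h2 : ((pol a).aroots (Om p)).toFinset.card ≤ n := by
      refine (Multiset.toFinset_card_le _).trans ((card_roots' _).trans ?_)
      rw [natDegree_map, pol_natDegree]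
    rw [aroots] at h1 h2
    change _ ≤ n - ((pol a).map (algebraMap (ZMod p) (Om p))).roots.toFinset.card at ha
    omega
  rcases Nat.lt_or_ge n k with hk | hk
  · have : Sk p n k = ∅ := by
      by_contra h
      obtain ⟨a, ha⟩ := Finset.nonempty_iff_ne_empty.2 h
      have := (hroots a ha).1
      omega
    rw [this]; simp
  set G := (Finset.range (n - k + 1)).biUnion (fun d => mon p d) with hG
  have hGc : G.card ≤ (n + 1) * p ^ (n - k) := by
    refine Finset.card_biUnion_le.trans ?_
    refine (Finset.sum_le_card_nsmul _ _ (p ^ (n - k)) ?_).trans ?_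
    · intro d hd
      rw [Finset.mem_range] at hd
      exact (card_mon_le d).trans (Nat.pow_le_pow_right hp.pos (by omega))
    · rw [Finset.card_range, smul_eq_mul]
      exact Nat.mul_le_mul_right _ (by omega)
  have h1 : (Sk p n k).card ≤ 2 ^ (n * n) * G.card := by
    refine Finset.card_le_mul_card_image_of_maps_to (f := fun a => radical (pol a)) ?_ _ ?_
    · intro a ha
      rw [hG, Finset.mem_biUnion]
      exact ⟨_, Finset.mem_range.2 (Nat.lt_succ_of_le (hroots a ha).2), (mem_mon _ _).2 ⟨rad_monic _, rfl⟩⟩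
    · intro g hg
      rw [hG, Finset.mem_biUnion] at hg
      obtain ⟨d, hd, hg⟩ := hg
      rw [Finset.mem_range] at hd
      rw [mem_mon] at hg
      rw [← Finset.card_image_of_injective _ (pol_inj (n := n) (F := ZMod p))]
      apply fiber_card n g hg.1 (by omega)
      intro f hf
      rw [Finset.mem_image] at hf
      obtain ⟨a, ha, rfl⟩ := hf
      rw [Finset.mem_filter] at ha
      exact ⟨pol_monic a, (pol_natDegree a).le, ha.2⟩
  calc (Sk p n k).card * p ^ k ≤ (2 ^ (n * n) * ((n + 1) * p ^ (n - k))) * p ^ k := by gcongr; exact h1.trans (by gcongr)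
    _ = 2 ^ (n * n) * (n + 1) * p ^ n := by
      conv_rhs => rw [show n = n - k + k by omega, pow_add]
      rw [show n - k + k = n by omega]; ring
end Stp

end

section
namespace Stp
section hat
variable {m n : ℕ} (p : Fin m → ℕ) [∀ i, Fact (p i).Prime] (hc : Pairwise (Function.onFun Nat.Coprime p))
  [NeZero (∏ i, p i)]

/-- the CRT tuple set -/
noncomputable def WW (S : ∀ i, Finset (Fin n → ZMod (p i))) : Finset (Fin n → ZMod (∏ i, p i)) :=
  Finset.univ.filter (fun b => ∀ i, (fun l => ZMod.prodEquivPi p hc (b l) i) ∈ S i)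

noncomputable def psi (i : Fin m) : AddChar (ZMod (p i)) ℂ :=
  (ZMod.stdAddChar (N := ∏ i, p i)).compAddMonoidHom
    ((ZMod.prodEquivPi p hc).symm.toAddEquiv.toAddMonoidHom.comp (AddMonoidHom.single (fun i => ZMod (p i)) i))

lemma psi_apply (i : Fin m) (y : ZMod (p i)) :
    psi p hc i y = ZMod.stdAddChar ((ZMod.prodEquivPi p hc).symm (Pi.single i y)) := rfl

lemma psi_ne (i : Fin m) : psi p hc i ≠ 1 := by
  intro h
  have h1 : psi p hc i 1 = 1 := by rw [h]; rfl
  rw [psi_apply, ← AddChar.map_zero_eq_one (ZMod.stdAddChar (N := ∏ i, p i))] at h1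
  have h2 := ZMod.injective_stdAddChar h1
  rw [map_eq_zero_iff _ (RingEquiv.injective _)] at h2
  have h3 := congrFun h2 i
  simp at h3

lemma std_prod (x : ZMod (∏ i, p i)) :
    ZMod.stdAddChar x = ∏ i, psi p hc i (ZMod.prodEquivPi p hc x i) := by
  simp_rw [psi_apply]
  have hs : ∀ (s : Finset (Fin m)) (f : Fin m → ZMod (∏ i, p i)),
      ZMod.stdAddChar (∑ i ∈ s, f i) = ∏ i ∈ s, ZMod.stdAddChar (f i) := by
    intro s f
    induction s using Finset.induction_on with
    | empty => simp
    | insert a s ha ih => rw [Finset.sum_insert ha, Finset.prod_insert ha, AddChar.map_add_eq_mul, ih]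
  rw [← hs, ← map_sum, Finset.univ_sum_single, RingEquiv.symm_apply_apply]

lemma hat_eq (S : ∀ i, Finset (Fin n → ZMod (p i))) (h : Fin n → ℤ) :
    ∑ b ∈ WW p hc S, ZMod.stdAddChar (∑ l, (h l : ZMod (∏ i, p i)) * b l) =
      ∏ i, ∑ a ∈ S i, psi p hc i (∑ l, (h l : ZMod (p i)) * a l) := by
  rw [Finset.prod_univ_sum]
  let E : (Fin n → ZMod (∏ i, p i)) ≃ (∀ i, Fin n → ZMod (p i)) :=
    (Equiv.piCongrRight fun _ => (ZMod.prodEquivPi p hc).toEquiv).trans (Equiv.piComm _)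
  have hE : ∀ b i l, E b i l = ZMod.prodEquivPi p hc (b l) i := fun b i l => rfl
  refine Finset.sum_equiv E ?_ ?_
  · intro b
    rw [WW, Finset.mem_filter, Fintype.mem_piFinset]
    simp only [Finset.mem_univ, true_and]
    rfl
  · intro b _
    rw [std_prod p hc]
    refine Finset.prod_congr rfl fun i _ => ?_
    congr 1
    simp only [hE, map_sum, map_mul, map_intCast, Finset.sum_apply, Pi.mul_apply, Pi.intCast_apply]

lemma hat_bound (S : ∀ i, Finset (Fin n → ZMod (p i))) 
    (hS : ∀ i, ∀ g : Fin n → ZMod (p i), g ≠ 0 → ∀ ψ : AddChar (ZMod (p i)) ℂ, ψ ≠ 1 →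
      ‖∑ a ∈ S i, ψ (∑ l, g l * a l)‖ ≤ (S i).card * (n / Real.sqrt (p i))) (h : Fin n → ℤ) :
    ‖∑ b ∈ WW p hc S, ZMod.stdAddChar (∑ l, (h l : ZMod (∏ i, p i)) * b l)‖ ≤
      (∏ i, ((S i).card : ℝ)) * ∏ i, (n / Real.sqrt (p i) + if ∀ l, (p i : ℤ) ∣ h l then 1 else 0) := by
  rw [hat_eq, norm_prod, ← Finset.prod_mul_distrib]
  refine Finset.prod_le_prod (fun _ _ => norm_nonneg _) fun i _ => ?_
  split_ifs with hd
  · have : ‖∑ a ∈ S i, psi p hc i (∑ l, (h l : ZMod (p i)) * a l)‖ ≤ (S i).card := by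
      refine (norm_sum_le _ _).trans ?_
      simp
    refine this.trans ?_
    have : (0:ℝ) ≤ n / Real.sqrt (p i) := by positivity
    nlinarith [Nat.cast_nonneg (α := ℝ) (S i).card]
  · rw [add_zero]
    refine hS i (fun l => (h l : ZMod (p i))) ?_ _ (psi_ne p hc i)
    intro h0
    apply hd
    intro l
    exact (ZMod.intCast_zmod_eq_zero_iff_dvd _ _).1 (congrFun h0 l)
end hat

lemma card_cls (a : ℤ) (L r : ℕ) (hr : 0 < r) (v : ℤ) :
    (((Finset.Ico a (a + L)).filter (fun x => x ≡ v [ZMOD r])).card : ℝ) ≤ (L : ℝ) / r + 1 := by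
  have h := Int.Ico_filter_modEq_card a (a + L) (r := (r:ℤ)) (by exact_mod_cast hr) v
  have h' : ((((Finset.Ico a (a + L)).filter (fun x => x ≡ v [ZMOD r])).card : ℤ) : ℝ) ≤ (L : ℝ) / r + 1 := by
    rw [h]
    push_cast
    apply max_le
    · have h1 : ((⌈(((a + L : ℤ)) - v : ℚ) / ((r:ℤ) : ℚ)⌉ : ℤ) : ℚ) < ((a + L : ℤ) - v : ℚ) / ((r:ℤ) : ℚ) + 1 := Int.ceil_lt_add_one _
      have h2 := Int.le_ceil ((a - v : ℚ) / ((r:ℤ) : ℚ))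
      have h3 : ((⌈(((a + L : ℤ)) - v : ℚ) / ((r:ℤ) : ℚ)⌉ : ℤ) : ℚ) - ((⌈(a - v : ℚ) / ((r:ℤ) : ℚ)⌉ : ℤ) : ℚ) ≤ (L:ℚ)/r + 1 := by
        have : (((a + L : ℤ)) - v : ℚ) / ((r:ℤ) : ℚ) = (a - v : ℚ) / ((r:ℤ) : ℚ) + (L:ℚ)/r := by
          push_cast; ring
        linarith
      have h4 : ((((⌈(((a + L : ℤ)) - v : ℚ) / ((r:ℤ) : ℚ)⌉ : ℤ) : ℚ) - ((⌈(a - v : ℚ) / ((r:ℤ) : ℚ)⌉ : ℤ) : ℚ) : ℚ) : ℝ) ≤ (((L:ℚ)/r + 1 : ℚ) : ℝ) := Rat.cast_le.2 h3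
      push_cast at h4 ⊢
      exact h4
    · positivity
  exact_mod_cast h'

/-- count of pairs -/
lemma card_pairs (J P : ℕ) (hP : 0 < P) :
    (((Finset.range J ×ˢ Finset.range J).filter (fun x => (P : ℤ) ∣ (x.1 : ℤ) - x.2)).card : ℝ) ≤
      J * ((J : ℝ) / P + 1) := by
  have : ((Finset.range J ×ˢ Finset.range J).filter (fun x => (P : ℤ) ∣ (x.1 : ℤ) - x.2)).card = 
     ∑ y ∈ Finset.range J, ((Finset.range J).filter (fun x : ℕ => (P : ℤ) ∣ (y : ℤ) - (x : ℤ))).card := by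
    simp_rw [Finset.card_filter]
    rw [Finset.sum_product]
  rw [this]
  push_cast
  refine (Finset.sum_le_card_nsmul _ _ ((J : ℝ) / P + 1) ?_).trans (by simp [mul_add])
  intro y _
  refine le_trans ?_ (card_cls 0 J P hP y)
  rw [Nat.cast_le]
  refine Finset.card_le_card_of_injOn (fun x => (x : ℤ)) ?_ (fun a _ b _ h => by simpa using h)
  intro x hx
  simp only [Finset.coe_filter, Finset.mem_range, Set.mem_ofPred_eq, Finset.mem_Ico] at hx ⊢
  refine ⟨⟨by positivity, by push_cast; omega⟩, ?_⟩
  exact Int.modEq_iff_dvd.2 hx.2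
end Stp

end

section
namespace Stp
section fej
variable {N : ℕ} [NeZero N]

noncomputable def phi (J : ℕ) (x : ZMod N) : ℝ := ‖∑ j ∈ Finset.range J, ZMod.stdAddChar ((j : ZMod N) * x)‖ ^ 2

lemma phi_nonneg (J : ℕ) (x : ZMod N) : 0 ≤ phi J x := by unfold phi; positivity

lemma phi_eq (J : ℕ) (x : ZMod N) : (phi J x : ℂ) =
    ∑ q ∈ Finset.range J ×ˢ Finset.range J, ZMod.stdAddChar ((((q.1 : ℤ) - (q.2 : ℤ) : ℤ) : ZMod N) * x) := by
  unfold phi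
  push_cast
  rw [← Complex.mul_conj', map_sum, Finset.sum_mul_sum, Finset.sum_product]
  refine Finset.sum_congr rfl fun j _ => Finset.sum_congr rfl fun k _ => ?_
  rw [← AddChar.map_neg_eq_conj, ← AddChar.map_add_eq_mul]
  congr 1
  push_cast
  ring

lemma phi_ge (J : ℕ) (x : ℤ) (H : ℝ) (hx : |(x : ℝ)| ≤ H) (hJ : J = 1 ∨ 8 * (J : ℝ) * H ≤ N) :
    (J : ℝ) ^ 2 / 4 ≤ phi J (x : ZMod N) := by
  rcases hJ with rfl | hJ
  · unfold phi
    simp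
    norm_num
  · have hN : (0:ℝ) < N := by exact_mod_cast Nat.pos_of_ne_zero (NeZero.ne N)
    have hre : (J : ℝ) / 2 ≤ (∑ j ∈ Finset.range J, ZMod.stdAddChar ((j : ZMod N) * (x : ZMod N))).re := by
      rw [Complex.re_sum]
      have : ∑ j ∈ Finset.range J, (1 / 2 : ℝ) ≤ ∑ j ∈ Finset.range J, (ZMod.stdAddChar ((j : ZMod N) * (x : ZMod N))).re := by
        refine Finset.sum_le_sum fun j hj => ?_
        rw [Finset.mem_range] at hj
        have e1 : ((j : ZMod N) * (x : ZMod N)) = (((j : ℤ) * x : ℤ) : ZMod N) := by push_cast; rfl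
        rw [e1, ZMod.stdAddChar_coe]
        have e2 : (2 * (Real.pi : ℂ) * Complex.I * (((j : ℤ) * x : ℤ) : ℂ) / (N : ℂ)) = ((2 * Real.pi * (j * x) / N : ℝ) : ℂ) * Complex.I := by
          push_cast; ring
        rw [e2, Complex.exp_ofReal_mul_I_re]
        have hb : |2 * Real.pi * ((j:ℝ) * x) / N| ≤ 1 := by
          rw [abs_div, abs_of_pos hN, div_le_one hN, abs_mul, abs_mul (j:ℝ), abs_of_pos (by positivity : (0:ℝ) < 2 * Real.pi), Nat.abs_cast]
          have h1 : (j : ℝ) * |(x : ℝ)| ≤ J * H := by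
            have : (j : ℝ) ≤ J := by exact_mod_cast hj.le
            gcongr
          have h2 := Real.pi_lt_four
          have h3 : 0 ≤ (j : ℝ) * |(x : ℝ)| := by positivity
          have h4 := Real.pi_pos
          nlinarith
        have h5 := Real.one_sub_sq_div_two_le_cos (x := 2 * Real.pi * ((j:ℝ) * x) / N)
        have h6 : (2 * Real.pi * ((j:ℝ) * x) / N) ^ 2 ≤ 1 := by
          rw [← sq_abs]; exact pow_le_one₀ (abs_nonneg _) hb
        linarith
      simpa [div_eq_mul_inv] using this
    unfold phi
    have h7 := (hre.trans (Complex.re_le_norm _))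
    have h8 : (0:ℝ) ≤ J / 2 := by positivity
    calc (J : ℝ) ^ 2 / 4 = (J / 2) ^ 2 := by ring
      _ ≤ _ := by gcongr

lemma sum_phi_le {n : ℕ} (W : Finset (Fin n → ZMod N)) (J : ℕ) :
    ∑ b ∈ W, ∏ l, phi J (b l) ≤ ∑ q ∈ Fintype.piFinset (fun _ : Fin n => Finset.range J ×ˢ Finset.range J),
      ‖∑ b ∈ W, ZMod.stdAddChar (∑ l, ((((q l).1 : ℤ) - ((q l).2 : ℤ) : ℤ) : ZMod N) * b l)‖ := by
  have hs : ∀ (s : Finset (Fin n)) (f : Fin n → ZMod N),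
      ZMod.stdAddChar (∑ i ∈ s, f i) = ∏ i ∈ s, ZMod.stdAddChar (f i) := by
    intro s f
    induction s using Finset.induction_on with
    | empty => simp
    | insert a s ha ih => rw [Finset.sum_insert ha, Finset.prod_insert ha, AddChar.map_add_eq_mul, ih]
  have h1 : ((∑ b ∈ W, ∏ l, phi J (b l) : ℝ) : ℂ) = ∑ q ∈ Fintype.piFinset (fun _ : Fin n => Finset.range J ×ˢ Finset.range J),
      ∑ b ∈ W, ZMod.stdAddChar (∑ l, ((((q l).1 : ℤ) - ((q l).2 : ℤ) : ℤ) : ZMod N) * b l) := by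
    rw [Finset.sum_comm]
    push_cast
    refine Finset.sum_congr rfl fun b _ => ?_
    simp_rw [phi_eq]
    rw [Finset.prod_univ_sum]
    refine Finset.sum_congr rfl fun q _ => ?_
    rw [hs]
    simp only [Int.cast_sub, Int.cast_natCast]
  have h2 : 0 ≤ ∑ b ∈ W, ∏ l, phi J (b l) :=
    Finset.sum_nonneg fun _ _ => Finset.prod_nonneg fun _ _ => phi_nonneg _ _
  calc ∑ b ∈ W, ∏ l, phi J (b l) = ‖((∑ b ∈ W, ∏ l, phi J (b l) : ℝ) : ℂ)‖ := by
        rw [Complex.norm_real, Real.norm_of_nonneg h2]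
    _ ≤ _ := by rw [h1]; exact norm_sum_le _ _
end fej

lemma total_bound {m n : ℕ} (hn : 1 ≤ n) (p : Fin m → ℕ) (hp : ∀ i, (p i).Prime) (hinj : Function.Injective p)
    (J : ℕ) (hJ : (J : ℝ) ^ (2 * n) ≤ ∏ i, (p i : ℝ)) :
    ∑ q ∈ Fintype.piFinset (fun _ : Fin n => Finset.range J ×ˢ Finset.range J),
      ∏ i, ((n : ℝ) / Real.sqrt (p i) + if ∀ l, (p i : ℤ) ∣ ((q l).1 : ℤ) - ((q l).2 : ℤ) then 1 else 0)
      ≤ (2 * n) ^ m * (2 * 2 ^ n * J ^ n) := by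
  simp_rw [Fintype.prod_add]
  rw [Finset.sum_comm]
  have hn1 : (1:ℝ) ≤ n := by exact_mod_cast hn
  have key : ∀ t : Finset (Fin m), 
     ∑ q ∈ Fintype.piFinset (fun _ : Fin n => Finset.range J ×ˢ Finset.range J),
      (∏ i ∈ t, ((n : ℝ) / Real.sqrt (p i))) * ∏ i ∈ tᶜ, (if ∀ l, (p i : ℤ) ∣ ((q l).1 : ℤ) - ((q l).2 : ℤ) then (1:ℝ) else 0)
      ≤ n ^ m * (2 * 2 ^ n * J ^ n) := by
    intro t
    set P := ∏ i ∈ tᶜ, p i with hP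
    set Q := ∏ i ∈ t, p i with hQ
    have hPpos : 0 < P := Finset.prod_pos fun i _ => (hp i).pos
    have hQpos : 0 < Q := Finset.prod_pos fun i _ => (hp i).pos
    have hP1 : (1:ℝ) ≤ P := by exact_mod_cast hPpos
    have hQ1 : (1:ℝ) ≤ Q := by exact_mod_cast hQpos
    have hPQ : (Q : ℝ) * P = ∏ i, (p i : ℝ) := by
      rw [hP, hQ]; push_cast; exact Finset.prod_mul_prod_compl _ _
    rw [← Finset.mul_sum]
    have c1 : ∑ q ∈ Fintype.piFinset (fun _ : Fin n => Finset.range J ×ˢ Finset.range J),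
       ∏ i ∈ tᶜ, (if ∀ l, (p i : ℤ) ∣ ((q l).1 : ℤ) - ((q l).2 : ℤ) then (1:ℝ) else 0) ≤
       (J * ((J : ℝ) / P + 1)) ^ n := by
      calc _ ≤ (((Fintype.piFinset (fun _ : Fin n => (Finset.range J ×ˢ Finset.range J).filter (fun x => (P : ℤ) ∣ (x.1 : ℤ) - x.2))).card : ℕ) : ℝ) := by
            have : (Fintype.piFinset (fun _ : Fin n => (Finset.range J ×ˢ Finset.range J).filter (fun x => (P : ℤ) ∣ (x.1 : ℤ) - x.2))) =
              (Fintype.piFinset (fun _ : Fin n => Finset.range J ×ˢ Finset.range J)).filter (fun q => ∀ l, (P : ℤ) ∣ ((q l).1 : ℤ) - ((q l).2 : ℤ)) := by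
              ext q
              simp only [Fintype.mem_piFinset, Finset.mem_filter]
              exact forall_and
            rw [this, Finset.card_filter]
            push_cast
            refine Finset.sum_le_sum fun q _ => ?_
            rw [Finset.prod_ite_zero]
            split_ifs with h1 h2
            · simp
            · exfalso
              apply h2
              intro l
              rw [hP]
              push_cast
              refine Finset.prod_dvd_of_coprime ?_ (fun i hi => h1 i hi l)
              intro i _ j _ hij
              exact Nat.isCoprime_iff_coprime.2 ((Nat.coprime_primes (hp i) (hp j)).2 (fun h => hij (hinj h)))
            · norm_num
            · norm_num
        _ = ((((Finset.range J ×ˢ Finset.range J).filter (fun x => (P : ℤ) ∣ (x.1 : ℤ) - x.2)).card : ℕ) : ℝ) ^ n := by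
            rw [Fintype.card_piFinset]; simp
        _ ≤ _ := by
            gcongr
            exact card_pairs J P hPpos
    have c2 : ∏ i ∈ t, ((n : ℝ) / Real.sqrt (p i)) ≤ n ^ m / Real.sqrt Q := by
      rw [Finset.prod_div_distrib, Finset.prod_const]
      have : ∏ i ∈ t, Real.sqrt (p i) = Real.sqrt Q := by
        rw [hQ]; push_cast
        rw [Real.sqrt_prod]
        intro i _; positivity
      rw [this]
      gcongr
      simpa using Finset.card_le_univ t
    have hsq : (1:ℝ) ≤ Real.sqrt Q := Real.one_le_sqrt.2 hQ1
    have c3 : ((J:ℝ) / P) ^ n ≤ Real.sqrt Q := by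
      apply Real.le_sqrt_of_sq_le
      rw [div_pow, div_pow, div_le_iff₀ (by positivity), ← pow_mul, ← pow_mul, mul_comm n 2]
      calc (J:ℝ) ^ (2 * n) ≤ Q * P := hPQ ▸ hJ
        _ ≤ Q * P ^ (2 * n) := by
          gcongr
          exact le_self_pow₀ hP1 (by omega)
    have c4 : ((J : ℝ) / P + 1) ^ n ≤ 2 ^ n * (((J:ℝ) / P) ^ n + 1) := by
      have h0 : (0:ℝ) ≤ (J:ℝ) / P := by positivity
      rcases le_total ((J:ℝ) / P) 1 with h | h
      · calc _ ≤ (2:ℝ) ^ n := by gcongr; linarith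
          _ ≤ _ := le_mul_of_one_le_right (by positivity) (by linarith [pow_nonneg h0 n])
      · calc _ ≤ (2 * ((J:ℝ) / P)) ^ n := by gcongr; linarith
          _ = 2 ^ n * ((J:ℝ) / P) ^ n := mul_pow _ _ _
          _ ≤ _ := by gcongr; linarith
    calc _ ≤ (n ^ m / Real.sqrt Q) * (J * ((J : ℝ) / P + 1)) ^ n := by
          gcongr
      _ ≤ (n ^ m / Real.sqrt Q) * (J ^ n * (2 ^ n * (Real.sqrt Q + Real.sqrt Q))) := by
          rw [mul_pow]
          gcongr
          exact c4.trans (by gcongr)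
      _ = _ := by field_simp; ring
  refine (Finset.sum_le_card_nsmul _ _ _ fun t _ => key t).trans ?_
  simp
  rw [mul_pow]
  apply le_of_eq
  ring
end Stp

end

namespace Stp

lemma count_le {N n : ℕ} [NeZero N] (H : ℝ) (hH : 2 ≤ H) (J : ℕ) (hJ : J = 1 ∨ 8 * (J : ℝ) * H ≤ N)
    (W : Finset (Fin n → ZMod N)) (A : Finset (Fin n → ℤ)) (hA : ∀ a ∈ A, ∀ l, |(a l : ℝ)| ≤ H)
    (hAW : ∀ a ∈ A, (fun l => (a l : ZMod N)) ∈ W) :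
    (A.card : ℝ) * ((J : ℝ) ^ 2 / 4) ^ n ≤ (3 * H / N + 1) ^ n * ∑ b ∈ W, ∏ l, phi J (b l) := by
  have hN : 0 < N := Nat.pos_of_ne_zero (NeZero.ne N)
  calc (A.card : ℝ) * ((J : ℝ) ^ 2 / 4) ^ n = ∑ a ∈ A, ∏ l : Fin n, ((J : ℝ) ^ 2 / 4) := by
        simp only [Finset.prod_const, Finset.sum_const, Finset.card_univ, Fintype.card_fin, nsmul_eq_mul]
    _ ≤ ∑ a ∈ A, ∏ l : Fin n, phi J ((a l : ZMod N)) := by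
        refine Finset.sum_le_sum fun a ha => Finset.prod_le_prod (fun _ _ => by positivity) fun l _ => ?_
        exact phi_ge J (a l) H (hA a ha l) hJ
    _ = ∑ b ∈ W, ∑ a ∈ A with (fun l => (a l : ZMod N)) = b, ∏ l : Fin n, phi J ((a l : ZMod N)) :=
        (Finset.sum_fiberwise_of_maps_to hAW _).symm
    _ = ∑ b ∈ W, ((A.filter (fun a => (fun l => (a l : ZMod N)) = b)).card : ℝ) * ∏ l : Fin n, phi J (b l) := by
        refine Finset.sum_congr rfl fun b _ => ?_
        rw [← nsmul_eq_mul, ← Finset.sum_const]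
        refine Finset.sum_congr rfl fun a ha => ?_
        rw [Finset.mem_filter] at ha
        rw [← ha.2]
    _ ≤ ∑ b ∈ W, (3 * H / N + 1) ^ n * ∏ l : Fin n, phi J (b l) := by
        refine Finset.sum_le_sum fun b _ => mul_le_mul_of_nonneg_right ?_ (Finset.prod_nonneg fun _ _ => phi_nonneg _ _)
        set F : ℕ := ⌊H⌋₊ with hF
        have hFH : (F : ℝ) ≤ H := Nat.floor_le (by linarith)
        set B : Fin n → Finset ℤ := fun l => (Finset.Ico (-(F:ℤ)) (-(F:ℤ) + ((2 * F + 1 : ℕ) : ℤ))).filter (fun x => x ≡ ((b l).val : ℤ) [ZMOD N]) with hB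
        have hsub : A.filter (fun a => (fun l => (a l : ZMod N)) = b) ⊆ Fintype.piFinset B := by
          intro a ha
          rw [Finset.mem_filter] at ha
          rw [Fintype.mem_piFinset]
          intro l
          rw [hB, Finset.mem_filter, Finset.mem_Ico]
          have h1 := hA a ha.1 l
          have h2 : (a l).natAbs ≤ F := by
            apply Nat.le_floor
            rw [Nat.cast_natAbs]; push_cast; exact h1
          refine ⟨⟨by omega, by push_cast; omega⟩, ?_⟩
          rw [← ZMod.intCast_eq_intCast_iff]
          have := congrFun ha.2 l
          rw [this]; simp
        calc _ ≤ ((Fintype.piFinset B).card : ℝ) := by exact_mod_cast Finset.card_le_card hsub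
          _ = ∏ l, ((B l).card : ℝ) := by rw [Fintype.card_piFinset]; push_cast; rfl
          _ ≤ ∏ l : Fin n, (3 * H / N + 1) := by
              refine Finset.prod_le_prod (fun _ _ => by positivity) fun l _ => ?_
              refine (card_cls _ _ N hN _).trans ?_
              gcongr
              push_cast
              linarith
          _ = _ := by simp
    _ = _ := by rw [Finset.mul_sum]

lemma fin_arith {m n : ℕ} (H N Ac Pr : ℝ) (hH : 2 ≤ H) (hN1 : 1 ≤ N) (hPr0 : 0 ≤ Pr) (J : ℕ)
    (hJ1 : (1:ℝ) ≤ J) (hJ3 : N ≤ 8 * H * J + 8 * H)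
    (h3 : Ac * ((J : ℝ) ^ 2 / 4) ^ n ≤ (3 * H / N + 1) ^ n * (Pr * ((2 * n) ^ m * (2 * 2 ^ n * J ^ n)))) :
    Ac * N ^ n ≤ (2 * 8 ^ n * 32 ^ n) * (2 * n) ^ m * H ^ n * Pr := by
  have hμ : (3 * H / N + 1) * N ≤ 32 * H * J := by
    have : (3 * H / N + 1) * N = 3 * H + N := by field_simp
    rw [this]
    nlinarith
  have hμn : ((3 * H / N + 1) * N) ^ n ≤ (32 * H * J) ^ n := by gcongr
  have h6 : (0:ℝ) < (J:ℝ) ^ (2 * n) := by positivity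
  refine le_of_mul_le_mul_right ?_ h6
  calc Ac * N ^ n * (J:ℝ) ^ (2 * n) = Ac * ((J : ℝ) ^ 2 / 4) ^ n * (4 ^ n * N ^ n) := by
        rw [div_pow, ← pow_mul]; field_simp
    _ ≤ (3 * H / N + 1) ^ n * (Pr * ((2 * n) ^ m * (2 * 2 ^ n * J ^ n))) * (4 ^ n * N ^ n) := by gcongr
    _ = ((3 * H / N + 1) * N) ^ n * (Pr * ((2 * n) ^ m * (2 * (2 ^ n * 4 ^ n) * J ^ n))) := by
        rw [mul_pow (3 * H / N + 1) N]; ring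
    _ ≤ (32 * H * J) ^ n * (Pr * ((2 * n) ^ m * (2 * (2 ^ n * 4 ^ n) * J ^ n))) := by gcongr
    _ = _ := by
        rw [← mul_pow]
        norm_num
        rw [mul_pow, mul_pow, two_mul n, pow_add]
        ring

lemma main_count {m n : ℕ} (hn : 1 ≤ n) (p : Fin m → ℕ) (hp : ∀ i, (p i).Prime) (hinj : Function.Injective p)
    [∀ i, Fact (p i).Prime] (k : Fin m → ℕ)
    (H : ℝ) (hH : 2 ≤ H) (hNH : (∏ i, (p i : ℝ)) ^ (2 * n - 1) ≤ H ^ (2 * n))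
    (A : Finset (Fin n → ℤ)) (hA : ∀ a ∈ A, ∀ l, |(a l : ℝ)| ≤ H)
    (hAS : ∀ a ∈ A, ∀ i, (fun l => (a l : ZMod (p i))) ∈ Sk (p i) n (k i)) :
    (A.card : ℝ) * (∏ i, (p i : ℝ)) ^ n ≤
      (2 * 8 ^ n * 32 ^ n) * (2 * n) ^ m * H ^ n * ∏ i, ((Sk (p i) n (k i)).card : ℝ) := by
  have hc : Pairwise (Function.onFun Nat.Coprime p) := fun i j hij =>
    (Nat.coprime_primes (hp i) (hp j)).2 (fun h => hij (hinj h))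
  have hNpos : 0 < ∏ i, p i := Finset.prod_pos fun i _ => (hp i).pos
  haveI : NeZero (∏ i, p i) := ⟨hNpos.ne'⟩
  set N : ℝ := ∏ i, (p i : ℝ) with hN
  have hNc : ((∏ i, p i : ℕ) : ℝ) = N := by rw [hN]; push_cast; rfl
  have hN1 : 1 ≤ N := by rw [← hNc]; exact_mod_cast hNpos
  set J : ℕ := max 1 ⌊N / (8 * H)⌋₊ with hJ
  have hJ1 : 1 ≤ J := le_max_left _ _
  have hJ1' : (1:ℝ) ≤ J := by exact_mod_cast hJ1
  have hJ2 : J = 1 ∨ 8 * (J : ℝ) * H ≤ N := by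
    rcases le_total ⌊N / (8 * H)⌋₊ 1 with h | h
    · left; rw [hJ, max_eq_left h]
    · right
      rw [hJ, max_eq_right h]
      have := Nat.floor_le (a := N / (8 * H)) (by positivity)
      rw [le_div_iff₀ (by positivity)] at this
      linarith
  have hJ3 : N ≤ 8 * H * J + 8 * H := by
    have h1 := Nat.lt_floor_add_one (N / (8 * H))
    rw [div_lt_iff₀ (by positivity)] at h1
    have h2 : ((⌊N / (8 * H)⌋₊ : ℕ) : ℝ) ≤ J := by exact_mod_cast le_max_right _ _
    nlinarith
  have hJ4 : (J : ℝ) ^ (2 * n) ≤ N := by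
    rcases hJ2 with h | h
    · rw [h]; simpa using hN1
    · have h1 : (J : ℝ) * H ≤ N := by nlinarith
      have h2 : ((J : ℝ) * H) ^ (2 * n) ≤ N ^ (2 * n) := by gcongr
      rw [mul_pow] at h2
      have h3 : N ^ (2 * n) = N * N ^ (2 * n - 1) := by
        rw [← pow_succ']; congr 1; omega
      have h4 : (0:ℝ) < H ^ (2 * n) := by positivity
      have h5 : N ^ (2 * n) ≤ N * H ^ (2 * n) := by rw [h3]; gcongr
      exact le_of_mul_le_mul_right (h2.trans h5) h4
  set S : ∀ i, Finset (Fin n → ZMod (p i)) := fun i => Sk (p i) n (k i) with hS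
  have h1 := count_le (N := ∏ i, p i) H hH J (by rw [hNc]; exact hJ2) (WW p hc S) A hA (by
    intro a ha
    rw [WW, Finset.mem_filter]
    refine ⟨Finset.mem_univ _, fun i => ?_⟩
    have := hAS a ha i
    simp only [map_intCast, Pi.intCast_apply]
    exact this)
  have h2 : ∑ b ∈ WW p hc S, ∏ l, phi J (b l) ≤ (∏ i, ((S i).card : ℝ)) * ((2 * n) ^ m * (2 * 2 ^ n * J ^ n)) := by
    refine (sum_phi_le _ _).trans ?_
    refine (Finset.sum_le_sum fun q _ => hat_bound p hc S (fun i g hg ψ hψ => fourier_bound (k i) hn g hg ψ hψ) (fun l => ((q l).1 : ℤ) - ((q l).2 : ℤ))).trans ?_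
    rw [← Finset.mul_sum]
    exact mul_le_mul_of_nonneg_left (total_bound hn p hp hinj J hJ4) (Finset.prod_nonneg fun _ _ => Nat.cast_nonneg _)
  rw [hNc] at h1
  have h3 := h1.trans (mul_le_mul_of_nonneg_left h2 (by positivity))
  exact fin_arith H N _ _ hH hN1 (Finset.prod_nonneg fun _ _ => Nat.cast_nonneg _) J hJ1' hJ3 h3
end Stp

/-- Corollary 4.8 of Bhargava's paper. Fix `n ≥ 1` and `0 < δ < 1/(2n-1)`. There are
constants `c = c(n) > 0` and `C = C(n,δ)` such that for every positive integer
`D = p_1^{k_1} ⋯ p_m^{k_m}` (the `p_i` distinct primes, each `k_i ≥ 2`) with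
`Cprod = p_1 ⋯ p_m < H^{1+δ}` (`H ≥ 2`), the number of monic integer polynomials
`x^n + a_1 x^{n-1} + ... + a_n` with `|a_i| ≤ H` whose reduction modulo `p_i` has index
at least `k_i` over `𝔽_{p_i}` for each `i` is at most `C·c^m·H^n/D`. -/
theorem index_ge_k_count_small_conductor (n : ℕ) (hn : 1 ≤ n) (δ : ℝ) (hδ0 : 0 < δ)
    (hδ1 : δ < 1 / (2 * (n : ℝ) - 1)) :
    ∃ c C : ℝ, 0 < c ∧ 0 < C ∧
      ∀ (m : ℕ) (p : Fin m → ℕ) (hp : ∀ i, (p i).Prime),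
        Function.Injective p → ∀ k : Fin m → ℕ, (∀ i, 2 ≤ k i) →
        ∀ H : ℝ, 2 ≤ H → (∏ i, (p i : ℝ)) < H ^ ((1 : ℝ) + δ) →
        (Set.ncard {a : Fin n → ℤ | (∀ i, |(a i : ℝ)| ≤ H) ∧
            ∀ i, k i ≤ indexModP (p i) (hp i) n a} : ℝ)
          ≤ C * c ^ m * H ^ n / (∏ i, (p i : ℝ) ^ k i) := by
  have hn1 : (1:ℝ) ≤ n := by exact_mod_cast hn
  refine ⟨2 * n * (2 ^ (n * n) * (n + 1)), 2 * 8 ^ n * 32 ^ n, by positivity, by positivity, ?_⟩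
  intro m p hp hinj k _ H hH hNH
  haveI : ∀ i, Fact (p i).Prime := fun i => ⟨hp i⟩
  have hppos : ∀ i, (0:ℝ) < p i := fun i => by exact_mod_cast (hp i).pos
  have hNpos : (0:ℝ) < ∏ i, (p i : ℝ) := Finset.prod_pos fun i _ => hppos i
  have hDpos : (0:ℝ) < ∏ i, (p i : ℝ) ^ k i := Finset.prod_pos fun i _ => pow_pos (hppos i) _
  have hNH2 : (∏ i, (p i : ℝ)) ^ (2 * n - 1) ≤ H ^ (2 * n) := by
    have e : ((2 * n - 1 : ℕ) : ℝ) = 2 * (n:ℝ) - 1 := by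
      rw [Nat.cast_sub (by omega)]; push_cast; ring
    calc (∏ i, (p i : ℝ)) ^ (2 * n - 1) ≤ (H ^ ((1 : ℝ) + δ)) ^ (2 * n - 1) := by gcongr
      _ = H ^ (((1 : ℝ) + δ) * (2 * (n:ℝ) - 1)) := by
          rw [← Real.rpow_natCast, ← Real.rpow_mul (by linarith), e]
      _ ≤ H ^ (((2 * n : ℕ) : ℝ)) := by
          apply Real.rpow_le_rpow_of_exponent_le (by linarith)
          rw [lt_div_iff₀ (by linarith)] at hδ1
          push_cast
          linarith
      _ = H ^ (2 * n) := Real.rpow_natCast _ _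
  have hfin : {a : Fin n → ℤ | (∀ i, |(a i : ℝ)| ≤ H) ∧
            ∀ i, k i ≤ indexModP (p i) (hp i) n a}.Finite := by
    refine Set.Finite.subset (Set.Finite.pi' (fun _ : Fin n => Set.finite_Icc (-⌈H⌉) ⌈H⌉)) ?_
    rintro a ⟨ha, -⟩ l
    have h1 := abs_le.1 (ha l)
    have h2 := Int.le_ceil H
    constructor
    · have : (((-⌈H⌉ : ℤ)) : ℝ) ≤ a l := by push_cast; linarith
      exact_mod_cast this
    · have : ((a l : ℤ) : ℝ) ≤ ((⌈H⌉ : ℤ) : ℝ) := by linarith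
      exact_mod_cast this
  rw [Set.ncard_eq_toFinset_card _ hfin]
  have hmain := Stp.main_count hn p hp hinj k H hH hNH2 hfin.toFinset
    (fun a ha => ((Set.Finite.mem_toFinset hfin).1 ha).1)
    (fun a ha i => by
      rw [Stp.Sk, Finset.mem_filter]
      exact ⟨Finset.mem_univ _, ((Set.Finite.mem_toFinset hfin).1 ha).2 i⟩)
  have hdens : (∏ i, ((Stp.Sk (p i) n (k i)).card : ℝ)) * (∏ i, (p i : ℝ) ^ k i) ≤
      (2 ^ (n * n) * (n + 1)) ^ m * (∏ i, (p i : ℝ)) ^ n := by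
    rw [← Finset.prod_mul_distrib, ← Finset.prod_pow]
    have : ((2:ℝ) ^ (n * n) * (n + 1)) ^ m = ∏ i : Fin m, ((2:ℝ) ^ (n * n) * (n + 1)) := by simp
    rw [this, ← Finset.prod_mul_distrib]
    refine Finset.prod_le_prod (fun _ _ => by positivity) fun i _ => ?_
    exact_mod_cast Stp.density (p := p i) (n := n) (k i)
  rw [le_div_iff₀ hDpos]
  refine le_of_mul_le_mul_right ?_ (pow_pos hNpos n)
  have h9 := mul_le_mul_of_nonneg_left hdens (show 0 ≤ (2 * 8 ^ n * 32 ^ n) * (2 * (n:ℝ)) ^ m * H ^ n by positivity)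
  have h10 := mul_le_mul_of_nonneg_right hmain hDpos.le
  rw [mul_pow (2 * (n:ℝ))]
  linarith
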